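/- If W is a small extension of a CTM U, then for some ordinal κ ∈ U, W is generated from U by an unbounded subset of κ; moreover κ can be chosen so that (U; ∈) ⊨ 'κ is a cardinal'. -/

import Mathlib

/-!
Common formalization layer for "Small extensions of set-theoretic universes".

We work with `ZFSet`, Mathlib's type of ZFC sets.  A "universe" `V` is a
`ZFSet` which is a (countable) transitive model of ZFC, where satisfaction
of ZFC is spelled out via an explicit first-order syntax `Fm` for languages
whose symbols are named by ZFC sets, together with a Tarskian satisfaction
predicate `Sat`.  TCIs (theories with constraints in interpretation), their
models, the forcings `ℙ(𝔗)`, derivative forcings, generic filters, the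
evaluation map `Eval^V`, local method definitions and the reducibility
relation `≤^M` are all defined below, following the paper.
-/

noncomputable section

namespace SmallExt

open Classical

attribute [local instance] Classical.propDecidable

instance : Nonempty ZFSet := ⟨∅⟩

/-! ### basic coding machinery -/

/-- Kuratowski ordered pair. -/
def opair (a b : ZFSet) : ZFSet := ZFSet.pair a b

/-- First projection of a Kuratowski pair. -/
def zfst (x : ZFSet) : ZFSet := ZFSet.sUnion (ZFSet.sInter x)

/-- Second projection of a Kuratowski pair. -/
def zsnd (x : ZFSet) : ZFSet :=
  ZFSet.sUnion
    (ZFSet.sep (fun y => ZFSet.sUnion x ≠ ZFSet.sInter x → y ∉ ZFSet.sInter x) (ZFSet.sUnion x))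

/-- The `n`-th von Neumann natural, as a ZFC set. -/
def natZ : ℕ → ZFSet
  | 0 => ∅
  | n + 1 => insert (natZ n) (natZ n)

/-- Internal coding of a finite list as an iterated pair (`[a] ↦ a`), so that
`ztuple` of a list of length `n` is a member of the `n`-th cartesian power. -/
def ztuple : List ZFSet → ZFSet
  | [] => ∅
  | [a] => a
  | a :: b :: l => opair a (ztuple (b :: l))

/-- Internal coding of a finite list as an iterated pair, with end marker `∅`. -/
def zlist : List ZFSet → ZFSet
  | [] => ∅
  | a :: l => opair a (zlist l)

/-- `n`-th cartesian power of a ZFC set (with `z^1 = z`, as in the paper). -/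
def ZPow (z : ZFSet) : ℕ → ZFSet
  | 0 => {∅}
  | 1 => z
  | n + 2 => ZFSet.prod z (ZPow z (n + 1))

/-- Decode an internal `n`-tuple into a list. -/
def decodeTuple : ℕ → ZFSet → List ZFSet
  | 0, _ => []
  | 1, t => [t]
  | n + 2, t => zfst t :: decodeTuple (n + 1) (zsnd t)

/-- Image of a ZFC set under an arbitrary (classically definable) function. -/
def zimage (f : ZFSet → ZFSet) (x : ZFSet) : ZFSet :=
  @ZFSet.image f (Classical.allZFSetDefinable _) x

/-- The set of finite subsets of a ZFC set. -/
def finSubsets (A : ZFSet) : ZFSet :=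
  ZFSet.sep (fun p => p.toSet.Finite) (ZFSet.powerset A)

/-- Application of a set-coded function (a set of ordered pairs) to an argument. -/
def iapp (I s : ZFSet) : ZFSet := Classical.epsilon fun v => opair s v ∈ I

/-- `f` is a set-coded function with domain `d`. -/
def IsZFunc (f d : ZFSet) : Prop :=
  (∀ q ∈ f, ∃ s v, q = opair s v ∧ s ∈ d) ∧ ∀ s ∈ d, ∃! v, opair s v ∈ f

/-- `j` is (the code of) an injective function from `a` into `b`. -/
def ZInjFun (j a b : ZFSet) : Prop :=
  IsZFunc j a ∧ (∀ s ∈ a, iapp j s ∈ b) ∧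
    ∀ s ∈ a, ∀ s' ∈ a, iapp j s = iapp j s' → s = s'

/-- Von Neumann ordinals: transitive sets of transitive sets. -/
def IsOrd (x : ZFSet) : Prop := x.IsTransitive ∧ ∀ y ∈ x, ZFSet.IsTransitive y

/-- `t` is the transitive closure of `a`. -/
def IsTrclOf (a t : ZFSet) : Prop :=
  a ⊆ t ∧ t.IsTransitive ∧ ∀ u, a ⊆ u → u.IsTransitive → t ⊆ u

/-! ### first-order syntax over set-named signatures -/

/-- Terms: de Bruijn variables, set parameters, and applications of
function symbols (named by ZFC sets; constants are `0`-ary functions). -/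
inductive Tm : Type 1
  | var : ℕ → Tm
  | param : ZFSet.{0} → Tm
  | func : ZFSet.{0} → (n : ℕ) → (Fin n → Tm) → Tm

/-- First-order formulas over set-named signatures (with equality). -/
inductive Fm : Type 1
  | rel : ZFSet.{0} → (n : ℕ) → (Fin n → Tm) → Fm
  | eq : Tm → Tm → Fm
  | not : Fm → Fm
  | imp : Fm → Fm → Fm
  | all : Fm → Fm
  | ex : Fm → Fm

/-- Derived conjunction. -/
def Fm.and (f g : Fm) : Fm := Fm.not (Fm.imp f (Fm.not g))

/-- Derived disjunction. -/
def Fm.or (f g : Fm) : Fm := Fm.imp (Fm.not f) g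

/-- Derived biconditional. -/
def Fm.iff (f g : Fm) : Fm := Fm.and (Fm.imp f g) (Fm.imp g f)

/-- Evaluation of terms. -/
def Tm.eval (fI : ZFSet → List ZFSet → ZFSet) (v : ℕ → ZFSet) : Tm → ZFSet
  | Tm.var n => v n
  | Tm.param a => a
  | Tm.func s n a => fI s (List.ofFn fun i => Tm.eval fI v (a i))

/-- Prepend a value to a valuation (for quantifiers). -/
def vcons (z : ZFSet) (v : ℕ → ZFSet) : ℕ → ZFSet
  | 0 => z
  | n + 1 => v n

/-- Tarskian satisfaction, parametrized by a class domain `domP`, an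
interpretation `rI` of the relation symbols and `fI` of the function symbols. -/
def Sat (domP : ZFSet → Prop) (rI : ZFSet → List ZFSet → Prop)
    (fI : ZFSet → List ZFSet → ZFSet) : Fm → (ℕ → ZFSet) → Prop
  | Fm.rel s n a, v => rI s (List.ofFn fun i => Tm.eval fI v (a i))
  | Fm.eq t u, v => Tm.eval fI v t = Tm.eval fI v u
  | Fm.not f, v => ¬ Sat domP rI fI f v
  | Fm.imp f g, v => Sat domP rI fI f v → Sat domP rI fI g v
  | Fm.all f, v => ∀ z, domP z → Sat domP rI fI f (vcons z v)
  | Fm.ex f, v => ∃ z, domP z ∧ Sat domP rI fI f (vcons z v)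

/-- Free variables of a term. -/
def Tm.free : Tm → Set ℕ
  | Tm.var n => {n}
  | Tm.param _ => ∅
  | Tm.func _ _ a => {m | ∃ i, m ∈ Tm.free (a i)}

/-- Free variables of a formula (de Bruijn). -/
def Fm.free : Fm → Set ℕ
  | Fm.rel _ _ a => {m | ∃ i, m ∈ Tm.free (a i)}
  | Fm.eq t u => Tm.free t ∪ Tm.free u
  | Fm.not f => Fm.free f
  | Fm.imp f g => Fm.free f ∪ Fm.free g
  | Fm.all f => {m | m + 1 ∈ Fm.free f}
  | Fm.ex f => {m | m + 1 ∈ Fm.free f}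

/-- Set parameters occurring in a term. -/
def Tm.paramSet : Tm → Set ZFSet
  | Tm.var _ => ∅
  | Tm.param a => {a}
  | Tm.func _ _ a => {b | ∃ i, b ∈ Tm.paramSet (a i)}

/-- Set parameters occurring in a formula. -/
def Fm.paramSet : Fm → Set ZFSet
  | Fm.rel _ _ a => {b | ∃ i, b ∈ Tm.paramSet (a i)}
  | Fm.eq t u => Tm.paramSet t ∪ Tm.paramSet u
  | Fm.not f => Fm.paramSet f
  | Fm.imp f g => Fm.paramSet f ∪ Fm.paramSet g
  | Fm.all f => Fm.paramSet f
  | Fm.ex f => Fm.paramSet f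

/-- Quantifier-free formulas. -/
def IsQF : Fm → Prop
  | Fm.rel _ _ _ => True
  | Fm.eq _ _ => True
  | Fm.not f => IsQF f
  | Fm.imp f g => IsQF f ∧ IsQF g
  | Fm.all _ => False
  | Fm.ex _ => False

mutual
  /-- `Π_n` formulas (prenex, with possibly empty quantifier blocks). -/
  inductive IsPi : ℕ → Fm → Prop where
    | qf {f} : IsQF f → IsPi 0 f
    | ofSigma {n f} : IsSigma n f → IsPi (n + 1) f
    | all {n f} : IsPi (n + 1) f → IsPi (n + 1) (Fm.all f)

  /-- `Σ_n` formulas (prenex, with possibly empty quantifier blocks). -/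
  inductive IsSigma : ℕ → Fm → Prop where
    | qf {f} : IsQF f → IsSigma 0 f
    | ofPi {n f} : IsPi n f → IsSigma (n + 1) f
    | ex {n f} : IsSigma (n + 1) f → IsSigma (n + 1) (Fm.ex f)
end

/-! ### the language of set theory and ZFC -/

/-- The name of the membership relation symbol. -/
def memSym : ZFSet := natZ 0

/-- The standard interpretation of `∈`. -/
def memRel : ZFSet → List ZFSet → Prop :=
  fun s args => s = memSym ∧ ∃ a b, args = [a, b] ∧ a ∈ b

/-- Satisfaction in the ∈-structure with domain `M` (a ZFC set). -/
def SatV (M : ZFSet) (f : Fm) (v : ℕ → ZFSet) : Prop :=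
  Sat (· ∈ M) memRel (fun _ _ => ∅) f v

/-- Satisfaction in the ambient (class-sized) ∈-structure. -/
def SatU (f : Fm) (v : ℕ → ZFSet) : Prop :=
  Sat (fun _ => True) memRel (fun _ _ => ∅) f v

/-- Atomic membership formula between de Bruijn variables. -/
def mem2 (i j : ℕ) : Fm := Fm.rel memSym 2 ![Tm.var i, Tm.var j]

/-- Equality between de Bruijn variables. -/
def eq2 (i j : ℕ) : Fm := Fm.eq (Tm.var i) (Tm.var j)

/-- Terms that are plain variables or parameters. -/
def Tm.noFunc : Tm → Prop
  | Tm.var _ => True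
  | Tm.param _ => True
  | Tm.func _ _ _ => False

/-- Formulas of the language of set theory (only `∈`, binary, no function
symbols; parameters allowed). -/
def Fm.memOnly : Fm → Prop
  | Fm.rel s n a => s = memSym ∧ n = 2 ∧ ∀ i, Tm.noFunc (a i)
  | Fm.eq t u => Tm.noFunc t ∧ Tm.noFunc u
  | Fm.not f => Fm.memOnly f
  | Fm.imp f g => Fm.memOnly f ∧ Fm.memOnly g
  | Fm.all f => Fm.memOnly f
  | Fm.ex f => Fm.memOnly f

/-- Iterated universal closure. -/
def allClose : ℕ → Fm → Fm
  | 0, f => f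
  | k + 1, f => allClose k (Fm.all f)

/-- Extensionality. -/
def extAx : Fm :=
  Fm.all (Fm.all (Fm.imp (Fm.all (Fm.iff (mem2 0 2) (mem2 0 1))) (eq2 1 0)))

/-- Pairing. -/
def pairAx : Fm := Fm.all (Fm.all (Fm.ex (Fm.and (mem2 2 0) (mem2 1 0))))

/-- Union. -/
def unionAx : Fm :=
  Fm.all (Fm.ex (Fm.all (Fm.all (Fm.imp (Fm.and (mem2 1 0) (mem2 0 3)) (mem2 1 2)))))

/-- Power set. -/
def powAx : Fm :=
  Fm.all (Fm.ex (Fm.all (Fm.imp (Fm.all (Fm.imp (mem2 0 1) (mem2 0 3))) (mem2 0 1))))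

/-- Infinity. -/
def infAx : Fm :=
  Fm.ex (Fm.and
    (Fm.ex (Fm.and (mem2 0 1) (Fm.all (Fm.not (mem2 0 1)))))
    (Fm.all (Fm.imp (mem2 0 1)
      (Fm.ex (Fm.and (mem2 0 2) (Fm.and (mem2 1 0)
        (Fm.all (Fm.iff (mem2 0 1) (Fm.or (mem2 0 2) (eq2 0 2))))))))))

/-- Foundation. -/
def fundAx : Fm :=
  Fm.all (Fm.imp (Fm.ex (mem2 0 1))
    (Fm.ex (Fm.and (mem2 0 1) (Fm.all (Fm.imp (mem2 0 1) (Fm.not (mem2 0 2)))))))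

/-- Choice (for families of nonempty pairwise disjoint sets). -/
def choiceAx : Fm :=
  Fm.all (Fm.imp
    (Fm.and
      (Fm.all (Fm.imp (mem2 0 1) (Fm.ex (mem2 0 1))))
      (Fm.all (Fm.all (Fm.imp
        (Fm.and (mem2 1 2) (Fm.and (mem2 0 2) (Fm.ex (Fm.and (mem2 0 2) (mem2 0 1)))))
        (eq2 1 0)))))
    (Fm.ex (Fm.all (Fm.imp (mem2 0 2)
      (Fm.ex (Fm.and (mem2 0 1) (Fm.and (mem2 0 2)
        (Fm.all (Fm.imp (Fm.and (mem2 0 2) (mem2 0 3)) (eq2 0 1))))))))))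

/-- Body of a separation instance: `∀x ∃s ∀z (z ∈ s ↔ z ∈ x ∧ φ)`,
where in `φ` the variable `0` is `z`, `2` is `x`, and `≥ 3` are parameters. -/
def sepBody (φ : Fm) : Fm :=
  Fm.all (Fm.ex (Fm.all (Fm.iff (mem2 0 1) (Fm.and (mem2 0 2) φ))))

/-- Body of a collection instance: `∀a ∃b ∀x∈a (∃y φ → ∃y∈b φ)`,
where in `φ` the variable `0` is `y`, `1` is `x`, `3` is `a`, and `≥ 4` are parameters. -/
def repBody (φ : Fm) : Fm :=
  Fm.all (Fm.ex (Fm.all (Fm.imp (mem2 0 2)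
    (Fm.imp (Fm.ex φ) (Fm.ex (Fm.and (mem2 0 2) φ))))))

/-- The ZFC axioms, as a set of sentences of the language of set theory. -/
def ZFCax : Set Fm :=
  {extAx, pairAx, unionAx, powAx, infAx, fundAx, choiceAx} ∪
    {f | ∃ k φ, Fm.memOnly φ ∧ Fm.paramSet φ = ∅ ∧ 1 ∉ Fm.free φ ∧ f = allClose k (sepBody φ)} ∪
    {f | ∃ k φ, Fm.memOnly φ ∧ Fm.paramSet φ = ∅ ∧ 2 ∉ Fm.free φ ∧ f = allClose k (repBody φ)}

/-- `M` is an ∈-model of ZFC. -/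
def SatZFC (M : ZFSet) : Prop := ∀ f ∈ ZFCax, SatV M f (fun _ => ∅)

/-- A transitive model of ZFC. -/
def IsTransModel (M : ZFSet) : Prop := M.IsTransitive ∧ SatZFC M

/-- A countable transitive model of ZFC. -/
def IsCTM (M : ZFSet) : Prop := IsTransModel M ∧ M.toSet.Countable

/-- `W` is an outer model of `U`: both are CTMs, `U ⊆ W`, and they have
the same ordinals. -/
def OuterModel (U W : ZFSet) : Prop :=
  IsCTM U ∧ IsCTM W ∧ U ⊆ W ∧ ∀ y ∈ W, IsOrd y → y ∈ U

/-- `W = U[m]`: `W` is an outer model of `U` and the smallest CTM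
containing `U` as a subset and `m` as an element. -/
def Generates (U m W : ZFSet) : Prop :=
  OuterModel U W ∧ m ∈ W ∧ ∀ W', IsCTM W' → U ⊆ W' → m ∈ W' → W ⊆ W'

/-- `W` is a small extension of `U`. -/
def IsSmallExt (U W : ZFSet) : Prop :=
  OuterModel U W ∧ ∃ m ∈ W, ∀ W', IsCTM W' → U ⊆ W' → m ∈ W' → W ⊆ W'

/-- `k` is a cardinal from the point of view of the model `U`: an ordinal
with no `U`-internal injection into a smaller ordinal. -/
def IsCardinalIn (U k : ZFSet) : Prop :=
  k ∈ U ∧ IsOrd k ∧ ∀ b ∈ k, ¬ ∃ j ∈ U, ZInjFun j k b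

end SmallExt
namespace SmallExt

attribute [local instance] Classical.propDecidable

/-! ### Theories with constraints in interpretation (TCIs) -/

/-- Coding of terms as ZFC sets. -/
def TmCode : Tm → ZFSet
  | Tm.var n => opair (natZ 0) (natZ n)
  | Tm.param a => opair (natZ 1) a
  | Tm.func s n a => opair (natZ 2) (opair s (zlist (List.ofFn fun i => TmCode (a i))))

/-- Coding of formulas as ZFC sets (the code of `¬ f` is `⟨2, code f⟩`). -/
def FmCode : Fm → ZFSet
  | Fm.rel s n a => opair (natZ 0) (opair s (zlist (List.ofFn fun i => TmCode (a i))))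
  | Fm.eq t u => opair (natZ 1) (opair (TmCode t) (TmCode u))
  | Fm.not f => opair (natZ 2) (FmCode f)
  | Fm.imp f g => opair (natZ 3) (opair (FmCode f) (FmCode g))
  | Fm.all f => opair (natZ 4) (FmCode f)
  | Fm.ex f => opair (natZ 5) (FmCode f)

/-- The first component of a TCI `⟨T, σ, U̇, ϑ⟩`: its theory. -/
def tciT (x : ZFSet) : ZFSet := zfst x

/-- The signature `σ` of a TCI. -/
def tciSig (x : ZFSet) : ZFSet := zfst (zsnd x)

/-- The distinguished unary relation symbol `U̇` of a TCI. -/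
def tciUdot (x : ZFSet) : ZFSet := zfst (zsnd (zsnd x))

/-- The interpretation constraint map `ϑ` of a TCI. -/
def tciTheta (x : ZFSet) : ZFSet := zsnd (zsnd (zsnd x))

/-- Symbols are coded as `⟨kind, ⟨arity, name⟩⟩` with kind `0` (relation),
`1` (function) or `2` (constant). -/
def symKind (s : ZFSet) : ZFSet := zfst s

/-- The (internal) arity of a symbol. -/
def symArity (s : ZFSet) : ZFSet := zfst (zsnd s)

/-- A well-formed symbol. -/
def IsSymbol (s : ZFSet) : Prop :=
  ∃ k a nm, s = opair k (opair a nm) ∧ (k = natZ 0 ∨ k = natZ 1 ∨ k = natZ 2) ∧ ∃ n : ℕ, a = natZ n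

/-- Decode an internal von Neumann natural. -/
def zToNat (a : ZFSet) : ℕ := if h : ∃ n, natZ n = a then h.choose else 0

/-- The arity of a symbol, as a natural number. -/
def arityOf (s : ZFSet) : ℕ := zToNat (symArity s)

/-- A term uses only symbols of the signature `σ` (with correct kinds and
arities) and no parameters. -/
def Tm.usesSig (σ : ZFSet) : Tm → Prop
  | Tm.var _ => True
  | Tm.param _ => False
  | Tm.func s n a => s ∈ σ ∧
      ((symKind s = natZ 1 ∧ symArity s = natZ n) ∨ (symKind s = natZ 2 ∧ n = 0)) ∧
      ∀ i, Tm.usesSig σ (a i)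

/-- A formula over the signature `σ` (no parameters). -/
def Fm.usesSig (σ : ZFSet) : Fm → Prop
  | Fm.rel s n a => s ∈ σ ∧ symKind s = natZ 0 ∧ symArity s = natZ n ∧ ∀ i, Tm.usesSig σ (a i)
  | Fm.eq t u => Tm.usesSig σ t ∧ Tm.usesSig σ u
  | Fm.not f => Fm.usesSig σ f
  | Fm.imp f g => Fm.usesSig σ f ∧ Fm.usesSig σ g
  | Fm.all f => Fm.usesSig σ f
  | Fm.ex f => Fm.usesSig σ f

/-- Same as `Fm.usesSig` but allowing set parameters (used for literals
with parameters). -/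
def Tm.usesSigP (σ : ZFSet) : Tm → Prop
  | Tm.var _ => True
  | Tm.param _ => True
  | Tm.func s n a => s ∈ σ ∧
      ((symKind s = natZ 1 ∧ symArity s = natZ n) ∨ (symKind s = natZ 2 ∧ n = 0)) ∧
      ∀ i, Tm.usesSigP σ (a i)

/-- A formula over the signature `σ`, allowing set parameters. -/
def Fm.usesSigP (σ : ZFSet) : Fm → Prop
  | Fm.rel s n a => s ∈ σ ∧ symKind s = natZ 0 ∧ symArity s = natZ n ∧ ∀ i, Tm.usesSigP σ (a i)
  | Fm.eq t u => Tm.usesSigP σ t ∧ Tm.usesSigP σ u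
  | Fm.not f => Fm.usesSigP σ f
  | Fm.imp f g => Fm.usesSigP σ f ∧ Fm.usesSigP σ g
  | Fm.all f => Fm.usesSigP σ f
  | Fm.ex f => Fm.usesSigP σ f

/-- Atomic formulas. -/
def Fm.isAtom : Fm → Prop
  | Fm.rel _ _ _ => True
  | Fm.eq _ _ => True
  | _ => False

/-- `x` is (the code of) a theory with constraints in interpretation:
a tuple `⟨T, σ, U̇, ϑ⟩` where `T` is a set of (codes of) first-order
sentences over `σ`, `U̇` is a unary relation symbol not in `σ`, and `ϑ`
maps each symbol of `σ ∪ {U̇}` to a pair `(y, i)` with `i ∈ {0, 1}` and `y`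
included in a finite cartesian power of the first component `z` of `ϑ(U̇)`,
with the disjointness conditions on the powers of `z` from the paper. -/
def IsTCI (x : ZFSet) : Prop :=
  x = opair (tciT x) (opair (tciSig x) (opair (tciUdot x) (tciTheta x))) ∧
  (∀ s ∈ tciSig x, IsSymbol s) ∧
  IsSymbol (tciUdot x) ∧ symKind (tciUdot x) = natZ 0 ∧ symArity (tciUdot x) = natZ 1 ∧
  tciUdot x ∉ tciSig x ∧
  IsZFunc (tciTheta x) (insert (tciUdot x) (tciSig x)) ∧
  (∀ s ∈ insert (tciUdot x) (tciSig x),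
    ∃ y i, iapp (tciTheta x) s = opair y i ∧ (i = natZ 0 ∨ i = natZ 1) ∧
      ∃ n : ℕ, y ⊆ ZPow (zfst (iapp (tciTheta x) (tciUdot x))) n) ∧
  (∀ n : ℕ, 1 < n →
    zfst (iapp (tciTheta x) (tciUdot x)) ∩
      ZPow (zfst (iapp (tciTheta x) (tciUdot x))) n = ∅) ∧
  (∀ m n : ℕ, 1 < m → m < n →
    ZPow (zfst (iapp (tciTheta x) (tciUdot x))) m ∩
      ZPow (zfst (iapp (tciTheta x) (tciUdot x))) n = ∅) ∧
  (∀ c ∈ tciT x, ∃ f : Fm, FmCode f = c ∧ Fm.free f = ∅ ∧ Fm.usesSig (tciSig x) f)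

/-- Satisfaction in a coded structure `M = ⟨U, I⟩`: relation symbols are
interpreted by `I` via internal tuples, function and constant symbols by the
(graph) values recorded in `I`. -/
def SatStr (M : ZFSet) (f : Fm) : Prop :=
  Sat (· ∈ zfst M) (fun s args => ztuple args ∈ iapp (zsnd M) s)
    (fun s args => if args = [] then iapp (zsnd M) s
      else Classical.epsilon fun b => ztuple (args ++ [b]) ∈ iapp (zsnd M) s)
    f (fun _ => ∅)

/-- The modelling relation `M ⊨* 𝔗` between coded structures and TCIs. -/
def ModelsTCI (M x : ZFSet) : Prop :=
  IsTCI x ∧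
  M = opair (zfst M) (zsnd M) ∧
  IsZFunc (zsnd M) (tciSig x) ∧
  -- the constraint on the universe
  (∀ y i, iapp (tciTheta x) (tciUdot x) = opair y i →
    (i = natZ 0 → zfst M ⊆ y) ∧ (i = natZ 1 → zfst M = y)) ∧
  -- the constraints on the symbols of the signature
  (∀ s ∈ tciSig x, ∀ y i, iapp (tciTheta x) s = opair y i →
    (symKind s = natZ 0 →
      (i = natZ 0 → iapp (zsnd M) s ⊆ y ∩ ZPow (zfst M) (arityOf s)) ∧
      (i = natZ 1 → iapp (zsnd M) s = y ∩ ZPow (zfst M) (arityOf s))) ∧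
    (symKind s = natZ 1 →
      (∀ args : List ZFSet, args.length = arityOf s → (∀ a ∈ args, a ∈ zfst M) →
        ∃! b, b ∈ zfst M ∧ ztuple (args ++ [b]) ∈ iapp (zsnd M) s) ∧
      (i = natZ 0 → iapp (zsnd M) s ⊆ y ∩ ZPow (zfst M) (arityOf s + 1)) ∧
      (i = natZ 1 → iapp (zsnd M) s = y ∩ ZPow (zfst M) (arityOf s + 1))) ∧
    (symKind s = natZ 2 → iapp (zsnd M) s ∈ y ∧ iapp (zsnd M) s ∈ zfst M)) ∧
  -- `M` satisfies the theory
  (∀ c ∈ tciT x, ∀ f : Fm, FmCode f = c → SatStr M f)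

/-- A `Π_n` TCI: one whose theory contains only `Π_n` sentences. -/
def IsPiTCI (n : ℕ) (x : ZFSet) : Prop :=
  IsTCI x ∧ ∀ c ∈ tciT x, ∃ f : Fm, FmCode f = c ∧ IsPi n f

/-- A `Σ_n` TCI: one whose theory contains only `Σ_n` sentences. -/
def IsSigmaTCI (n : ℕ) (x : ZFSet) : Prop :=
  IsTCI x ∧ ∀ c ∈ tciT x, ∃ f : Fm, FmCode f = c ∧ IsSigma n f

/-- A TCI in `V` is consistent iff it has a model in some outer model of `V`. -/
def ConsistentTCI (V x : ZFSet) : Prop :=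
  ∃ W M, OuterModel V W ∧ M ∈ W ∧ ModelsTCI M x

/-! ### the language fragment `𝓛_𝔗` and the diagram `Σ(𝔗, M)` -/

/-- The set of codes of atomic sentences (with parameters) associated to a
symbol `s` of a TCI `x`, as in the proof of Proposition 3.22 of the paper. -/
def codesFor (x s : ZFSet) : ZFSet :=
  if symKind s = natZ 0 then
    zimage (fun t => FmCode (Fm.rel s (arityOf s)
      fun i => Tm.param ((decodeTuple (arityOf s) t).getD i ∅)))
      (zfst (iapp (tciTheta x) s))
  else if symKind s = natZ 1 then
    zimage (fun t => FmCode (Fm.eq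
      (Tm.func s (arityOf s) fun i => Tm.param ((decodeTuple (arityOf s + 1) t).getD i ∅))
      (Tm.param ((decodeTuple (arityOf s + 1) t).getD (arityOf s) ∅))))
      (zfst (iapp (tciTheta x) s))
  else
    zimage (fun a => FmCode (Fm.eq (Tm.func s 0 Fin.elim0) (Tm.param a)))
      (zfst (iapp (tciTheta x) s))

/-- The atomic sentences of `𝓛_𝔗`. -/
def LLbase (x : ZFSet) : ZFSet :=
  ZFSet.sUnion (zimage (fun s => codesFor x s) (insert (tciUdot x) (tciSig x)))

/-- The language fragment `𝓛_𝔗`: atomic sentences with parameters, closed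
under negation. -/
def LL (x : ZFSet) : ZFSet :=
  LLbase x ∪ zimage (fun t => opair (natZ 2) t) (LLbase x)

/-- A literal of `𝓛_𝔗` true in the structure `M` (with `U̇` interpreted as
the domain of `M`). -/
def LitTrue (x M : ZFSet) (f : Fm) : Prop :=
  (∃ a, f = Fm.rel (tciUdot x) 1 (fun _ => Tm.param a) ∧ a ∈ zfst M) ∨
  (∃ a, f = Fm.not (Fm.rel (tciUdot x) 1 (fun _ => Tm.param a)) ∧ a ∉ zfst M) ∨
  (∃ g, (f = g ∨ f = Fm.not g) ∧ Fm.isAtom g ∧ Fm.usesSigP (tciSig x) g ∧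
    (∀ a ∈ Fm.paramSet g, a ∈ zfst M) ∧
    (f = g → SatStr M g) ∧ (f = Fm.not g → ¬ SatStr M g))

/-- The `𝔗`-specific atomic diagram `Σ(𝔗, M)` of a model `M` of `𝔗`. -/
def SigmaSet (x M : ZFSet) : ZFSet :=
  ZFSet.sep (fun c => ∃ f : Fm, FmCode f = c ∧ LitTrue x M f) (LL x)

/-! ### forcing notions and generic filters -/

/-- A forcing notion coded as a pair `⟨P, ≤⟩` of a set of conditions and a
partial order (a set of Kuratowski pairs). -/
def IsForcing (P : ZFSet) : Prop :=
  P = opair (zfst P) (zsnd P) ∧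
  (∀ q ∈ zsnd P, ∃ a ∈ zfst P, ∃ b ∈ zfst P, q = opair a b) ∧
  (∀ a ∈ zfst P, opair a a ∈ zsnd P) ∧
  (∀ a b c : ZFSet, opair a b ∈ zsnd P → opair b c ∈ zsnd P → opair a c ∈ zsnd P) ∧
  (∀ a b : ZFSet, opair a b ∈ zsnd P → opair b a ∈ zsnd P → a = b)

/-- `a ≤ b` in the coded forcing `P` (`a` extends, i.e. is stronger than, `b`). -/
def ple (P a b : ZFSet) : Prop := opair a b ∈ zsnd P

/-- `g` is a filter on the coded forcing `P`. -/
def IsFilterOn (P g : ZFSet) : Prop :=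
  g ⊆ zfst P ∧
  (∀ p ∈ g, ∀ q ∈ zfst P, ple P p q → q ∈ g) ∧
  (∀ p ∈ g, ∀ q ∈ g, ∃ r ∈ g, ple P r p ∧ ple P r q)

/-- `D` is a dense subset of the coded forcing `P`. -/
def IsDenseIn (P D : ZFSet) : Prop :=
  D ⊆ zfst P ∧ ∀ p ∈ zfst P, ∃ q ∈ D, ple P q p

/-- `g` is a `P`-generic filter over `V`: a filter on `P` meeting all dense
subsets of `P` lying in `V`. -/
def GenericFilterOver (V P g : ZFSet) : Prop :=
  IsFilterOn P g ∧ ∀ D ∈ V, IsDenseIn P D → ∃ q ∈ g, q ∈ D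

/-- `p` is an atom of the coded forcing `P`: any two extensions of `p`
are compatible. -/
def PAtom (P p : ZFSet) : Prop :=
  p ∈ zfst P ∧ ∀ q₁ ∈ zfst P, ∀ q₂ ∈ zfst P, ple P q₁ p → ple P q₂ p →
    ∃ r ∈ zfst P, ple P r q₁ ∧ ple P r q₂

/-- An atomless forcing notion. -/
def Atomless (P : ZFSet) : Prop := ∀ p ∈ zfst P, ¬ PAtom P p

/-- `g_p(ℙ) = {q ∈ P : q` is compatible with `p}`. -/
def gpSet (P p : ZFSet) : ZFSet :=
  ZFSet.sep (fun q => ∃ r ∈ zfst P, ple P r q ∧ ple P r p) (zfst P)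

/-- The reverse-inclusion order on a set `p` of conditions, as a set of pairs. -/
def supsetOrder (p : ZFSet) : ZFSet :=
  ZFSet.sep (fun q => ∃ a ∈ p, ∃ b ∈ p, q = opair a b ∧ b ⊆ a) (ZFSet.prod p p)

/-! ### the forcings `ℙ(𝔗)` and their derivatives -/

/-- `P(𝔗)`: finite subsets of `𝓛_𝔗` included in `Σ(𝔗, M)` for some model
`M` of `𝔗` in some outer model of `V`. -/
def PT (V x : ZFSet) : ZFSet :=
  ZFSet.sep
    (fun p => ∃ W M, OuterModel V W ∧ M ∈ W ∧ ModelsTCI M x ∧ p ⊆ SigmaSet x M)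
    (finSubsets (LL x))

/-- The forcing notion `ℙ(𝔗) = (P(𝔗), ⊇)`. -/
def Pforcing (V x : ZFSet) : ZFSet := opair (PT V x) (supsetOrder (PT V x))

/-- `q` is an atom of a `⊇`-ordered set `P` of conditions. -/
def SupAtomIn (P q : ZFSet) : Prop :=
  q ∈ P ∧ ∀ q₁ ∈ P, ∀ q₂ ∈ P, q ⊆ q₁ → q ⊆ q₂ → ∃ r ∈ P, q₁ ⊆ r ∧ q₂ ⊆ r

/-- The derivative forcings `P(𝔗)^{(α)}`: conditions certified by the diagram
of a model of `𝔗` avoiding all atoms of all earlier stages (stage `0` is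
`P(𝔗)` itself). -/
def PTa (V x : ZFSet) : Ordinal.{1} → ZFSet :=
  WellFounded.fix wellFounded_lt fun α rec =>
    ZFSet.sep
      (fun p => ∃ W M, OuterModel V W ∧ M ∈ W ∧ ModelsTCI M x ∧ p ⊆ SigmaSet x M ∧
        ∀ β, ∀ h : β < α, ∀ q, SupAtomIn (rec β h) q → ¬ q ⊆ SigmaSet x M)
      (finSubsets (LL x))

/-- The ordinal `|[𝓛_𝔗]^{<ω}|⁺`, bounding the derivative process. -/
def cardBound (x : ZFSet) : Ordinal.{1} :=
  (Order.succ (Cardinal.mk (finSubsets (LL x)).toSet)).ord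

/-- The fixed point `P(𝔗)^⊤` of the derivative process. -/
def PTtopSet (V x : ZFSet) : ZFSet :=
  PTa V x (sInf {α : Ordinal.{1} | PTa V x α = PTa V x (Order.succ α)})

/-- The forcing notion `ℙ(𝔗)^⊤`. -/
def PtopForcing (V x : ZFSet) : ZFSet :=
  opair (PTtopSet V x) (supsetOrder (PTtopSet V x))

/-- `M` is an almost finitely determined model of `𝔗`: `p ⊆ Σ(𝔗, M)` for
some atom `p` of some derivative forcing `ℙ(𝔗)^{(α)}`, `α < |[𝓛_𝔗]^{<ω}|⁺`. -/
def AlmostFinDet (V x M : ZFSet) : Prop :=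
  ModelsTCI M x ∧ ∃ α : Ordinal.{1}, α < cardBound x ∧
    ∃ p, SupAtomIn (PTa V x α) p ∧ p ⊆ SigmaSet x M

/-- All models of `𝔗` in outer models of `V` are almost finitely determined. -/
def AllAFD (V x : ZFSet) : Prop :=
  ∀ W M, OuterModel V W → M ∈ W → ModelsTCI M x → AlmostFinDet V x M

/-! ### the TCI `𝔗(ℙ)` of a forcing notion -/

/-- The symbol `≤̇` (binary relation). -/
def leSym : ZFSet := opair (natZ 0) (opair (natZ 2) (natZ 0))

/-- The symbol `Ġ` (unary relation) for the generic filter. -/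
def gSym : ZFSet := opair (natZ 0) (opair (natZ 1) (natZ 1))

/-- The symbol `Ḋ` (unary relation) associated to the dense set `D`. -/
def dSym (D : ZFSet) : ZFSet := opair (natZ 0) (opair (natZ 1) (opair (natZ 2) D))

/-- The distinguished symbol `U̇` used for `𝔗(ℙ)` and `𝔗_s`. -/
def udSym : ZFSet := opair (natZ 0) (opair (natZ 1) (natZ 3))

/-- The set of dense subsets of a coded forcing notion `P`. -/
def denseSets (P : ZFSet) : ZFSet :=
  ZFSet.sep (fun D => ∀ p ∈ zfst P, ∃ q ∈ D, ple P q p) (ZFSet.powerset (zfst P))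

/-- `Ġ(i)` as a formula. -/
def relG (i : ℕ) : Fm := Fm.rel gSym 1 (fun _ => Tm.var i)

/-- `i ≤̇ j` as a formula. -/
def relLe (i j : ℕ) : Fm := Fm.rel leSym 2 ![Tm.var i, Tm.var j]

/-- The sentences of `𝔗(ℙ)`: `Ġ` is a filter meeting each dense set. -/
def TofPTheory (P : ZFSet) : ZFSet :=
  insert (FmCode (Fm.all (Fm.all (Fm.ex (Fm.imp (Fm.and (relG 2) (relG 1))
      (Fm.and (relG 0) (Fm.and (relLe 0 2) (relLe 0 1))))))))
    (insert (FmCode (Fm.all (Fm.all (Fm.imp (Fm.and (relLe 1 0) (relG 1)) (relG 0)))))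
      (zimage (fun D => FmCode (Fm.ex (Fm.and (relG 0) (Fm.rel (dSym D) 1 (fun _ => Tm.var 0)))))
        (denseSets P)))

/-- The constraint map of `𝔗(ℙ)`. -/
def TofPTheta (P : ZFSet) : ZFSet :=
  insert (opair udSym (opair (zfst P) (natZ 1)))
    (insert (opair leSym (opair (zsnd P) (natZ 1)))
      (insert (opair gSym (opair (zfst P) (natZ 0)))
        (zimage (fun D => opair (dSym D) (opair D (natZ 1))) (denseSets P))))

/-- The `Π₂` TCI `𝔗(ℙ)` whose models (in outer models of `V`) are exactly
the `ℙ`-generic filters over `V`. -/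
def TofP (P : ZFSet) : ZFSet :=
  opair (TofPTheory P)
    (opair (insert leSym (insert gSym (zimage dSym (denseSets P))))
      (opair udSym (TofPTheta P)))

/-! ### evaluations, local method definitions and `≤^M` -/

/-- `Eval^V(𝔗) = {V[M] : M ⊨* 𝔗` in some outer model of `V}`. -/
def EvalT (V x : ZFSet) : Set ZFSet :=
  {W' | ∃ W M, OuterModel V W ∧ M ∈ W ∧ ModelsTCI M x ∧ Generates V M W'}

/-- A valuation loading one set at variable `0`. -/
def vone (a : ZFSet) : ℕ → ZFSet := fun n => if n = 0 then a else ∅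

/-- A valuation loading two sets at variables `0`, `1`. -/
def vtwo (a b : ZFSet) : ℕ → ZFSet := fun n => if n = 0 then a else if n = 1 then b else ∅

/-- A valuation loading three sets at variables `0`, `1`, `2`. -/
def vthree (a b c : ZFSet) : ℕ → ZFSet :=
  fun n => if n = 0 then a else if n = 1 then b else if n = 2 then c else ∅

/-- The class function `F` (restricted to the class `X`) is definable in `V`
with parameters in `V`. -/
def DefFunIn (V : ZFSet) (X : ZFSet → Prop) (F : ZFSet → ZFSet) : Prop :=
  ∃ φ : Fm, Fm.memOnly φ ∧ (∀ a ∈ Fm.paramSet φ, a ∈ V) ∧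
    ∀ x, x ∈ V → X x → ∀ y, y ∈ V → (SatV V φ (vtwo x y) ↔ y = F x)

/-- A local method definition over `V`: a nonempty class of TCIs in `V`,
definable in `V` with parameters in `V`. -/
def LocalMethodDef (V : ZFSet) (X : ZFSet → Prop) : Prop :=
  (∃ t, X t) ∧ (∀ t, X t → t ∈ V ∧ IsTCI t) ∧
  ∃ φ : Fm, Fm.memOnly φ ∧ (∀ a ∈ Fm.paramSet φ, a ∈ V) ∧
    ∀ t, t ∈ V → (X t ↔ SatV V φ (vone t))

/-- The reducibility relation `X ≤^M Y` between local method definitions: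
some `V`-definable `F : X → Y` satisfies
`∅ ≠ Eval^V(F(𝔗)) ⊆ Eval^V(𝔗)` for all consistent `𝔗 ∈ X`. -/
def LeqM (V : ZFSet) (X Y : ZFSet → Prop) : Prop :=
  ∃ F : ZFSet → ZFSet, DefFunIn V X F ∧
    (∀ x, x ∈ V → X x → F x ∈ V ∧ Y (F x)) ∧
    ∀ x, x ∈ V → X x → ConsistentTCI V x →
      (EvalT V (F x)).Nonempty ∧ EvalT V (F x) ⊆ EvalT V x

/-- `X ≡^M Y`. -/
def EquivM (V : ZFSet) (X Y : ZFSet → Prop) : Prop := LeqM V X Y ∧ LeqM V Y X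

/-- The local method definition `Π^M_n` of all `Π_n` TCIs. -/
def PiM (n : ℕ) : ZFSet → Prop := IsPiTCI n

/-- The local method definition `Σ^M_n` of all `Σ_n` TCIs. -/
def SigmaM (n : ℕ) : ZFSet → Prop := IsSigmaTCI n

/-- The local method definition `Fg = {𝔗(ℙ) : ℙ` a forcing notion in `V}`. -/
def FgClass (V : ZFSet) : ZFSet → Prop :=
  fun t => ∃ P, P ∈ V ∧ IsForcing P ∧ t = TofP P

/-! ### H(κ), collapse forcing, and structure-genericity -/

/-- `H` is (the code of) `H(|trcl(t)|⁺)` as computed inside `V`: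
the set of all `y ∈ V` whose transitive closure admits, in `V`,
an injection into the transitive closure of `t`. -/
def IsHIn (V t H : ZFSet) : Prop :=
  H ∈ V ∧ ∀ y, (y ∈ H ↔ (y ∈ V ∧
    ∀ ty tt, IsTrclOf {y} ty → IsTrclOf t tt → ∃ j ∈ V, ZInjFun j ty tt))

/-- The conditions of the collapse `Col(ω, λ)`: finite partial functions
from `ω` to `λ`. -/
def ColSet (lam : ZFSet) : ZFSet :=
  ZFSet.sep
    (fun f => (∀ q ∈ f, ∃ a b, q = opair a b) ∧
      (∀ a b b' : ZFSet, opair a b ∈ f → opair a b' ∈ f → b = b') ∧ f.toSet.Finite)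
    (ZFSet.powerset (ZFSet.prod ZFSet.omega lam))

/-- The collapse forcing `Col(ω, λ)`, ordered by reverse inclusion. -/
def ColForcing (lam : ZFSet) : ZFSet := opair (ColSet lam) (supsetOrder (ColSet lam))

/-- `g` is a `P`-generic filter over the ∈-structure with domain `H`:
a filter on `P` meeting every dense subset of `P` definable over `(H; ∈)`
with parameters in `H`. -/
def GenericOverStruct (H P g : ZFSet) : Prop :=
  IsFilterOn P g ∧
  ∀ φ : Fm, Fm.memOnly φ → (∀ a ∈ Fm.paramSet φ, a ∈ H) →
    ((∀ p ∈ zfst P, ∃ q ∈ zfst P, SatV H φ (vone q) ∧ ple P q p) →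
      ∃ q ∈ g, SatV H φ (vone q))

/-- The `Π₀` TCI `𝔗_s` whose models in any outer model are the subsets of `s`. -/
def Tsub (s : ZFSet) : ZFSet :=
  opair ∅ (opair ∅ (opair udSym ({opair udSym (opair s (natZ 0))} : ZFSet)))

end SmallExt

namespace SmallExt

/-- `g_p` for a `⊇`-ordered set of conditions `P`:
the conditions compatible with `p`. -/
def gpSup (P p : ZFSet) : ZFSet :=
  ZFSet.sep (fun q => ∃ r ∈ P, q ⊆ r ∧ p ⊆ r) P

/-- Outer models among arbitrary (not necessarily countable) transitive
models of ZFC. -/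
def OuterModelT (U W : ZFSet) : Prop :=
  IsTransModel U ∧ IsTransModel W ∧ U ⊆ W ∧ ∀ y ∈ W, IsOrd y → y ∈ U

/-- Consistency of a TCI relative to a transitive model `U` of ZFC. -/
def ConsistentT (U x : ZFSet) : Prop :=
  ∃ W M, OuterModelT U W ∧ M ∈ W ∧ ModelsTCI M x

end SmallExt

/-!
Take `k` least among the ordinals of `U` such that some subset of `k` generates `W` over `U`.
An injection of `k` into a smaller ordinal lying in `U`, or a bound below `k` for the generating
set, would give a generating subset of a smaller ordinal; so `k` is a cardinal of `U` and the set
is unbounded. Such a `k` exists: put a generator of `W` into a transitive set `t ∈ W`, enumerate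
`t` in `W` by an ordinal `l`, and transport membership to a subset of `l × l`. A model containing
that relation recovers `t` by the Mostowski collapse, and `U` well-orders `l × l`.
-/

namespace SmallExt

/-! ### Satisfaction and parameters -/

section Satisfaction

variable {M : ZFSet.{0}} {v w : ℕ → ZFSet.{0}} {f g : Fm}

theorem sat_mem2 (i j : ℕ) : SatV M (mem2 i j) v ↔ v i ∈ v j := by
  simp [SatV, mem2, Sat, memRel, Tm.eval, List.ofFn_succ]

theorem sat_eq2 (i j : ℕ) : SatV M (eq2 i j) v ↔ v i = v j := Iff.rfl

theorem sat_not : SatV M f.not v ↔ ¬ SatV M f v := Iff.rfl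

theorem sat_imp : SatV M (f.imp g) v ↔ (SatV M f v → SatV M g v) := Iff.rfl

theorem sat_all : SatV M f.all v ↔ ∀ z ∈ M, SatV M f (vcons z v) := Iff.rfl

theorem sat_ex : SatV M f.ex v ↔ ∃ z ∈ M, SatV M f (vcons z v) := Iff.rfl

theorem sat_and : SatV M (f.and g) v ↔ SatV M f v ∧ SatV M g v := by
  simp only [Fm.and, sat_not, sat_imp]; tauto

theorem sat_iff : SatV M (f.iff g) v ↔ (SatV M f v ↔ SatV M g v) := by
  simp only [Fm.iff, sat_and, sat_imp]; tauto

theorem vcons_head_tail (v : ℕ → ZFSet) : vcons (v 0) (fun n => v (n + 1)) = v := by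
  funext n; cases n <;> rfl

theorem sat_of_allClose (k : ℕ) (h : SatV M (allClose k f) v) (hw : ∀ i < k, w i ∈ M)
    (hwv : ∀ n, w (n + k) = v n) : SatV M f w := by
  induction k generalizing f w with
  | zero => rwa [show w = v from funext hwv]
  | succ k ih =>
    have hall : SatV M f.all fun n => w (n + 1) :=
      ih h (fun i hi => hw (i + 1) (by omega)) fun n => hwv n
    exact vcons_head_tail w ▸ hall (w 0) (hw 0 k.succ_pos)

end Satisfaction

theorem Tm.paramSet_finite (t : Tm) : t.paramSet.Finite := by
  induction t with
  | var _ => exact Set.finite_empty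
  | param a => exact Set.finite_singleton a
  | func s n a ih => exact (Set.finite_iUnion ih).subset fun _ ⟨i, hi⟩ => Set.mem_iUnion.2 ⟨i, hi⟩

theorem Fm.paramSet_finite (f : Fm) : f.paramSet.Finite := by
  induction f with
  | rel s n a =>
    exact (Set.finite_iUnion fun i => (a i).paramSet_finite).subset
      fun _ ⟨i, hi⟩ => Set.mem_iUnion.2 ⟨i, hi⟩
  | eq t u => exact t.paramSet_finite.union u.paramSet_finite
  | not _ ih => exact ih
  | imp f g ihf ihg => exact ihf.union ihg
  | all _ ih => exact ih
  | ex _ ih => exact ih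

/-- The action of a renaming of de Bruijn variables below one more binder. -/
def liftVar (ρ : ℕ → ℕ) : ℕ → ℕ
  | 0 => 0
  | n + 1 => ρ n + 1

/-- Renaming of the variables of a term along `ρ`, each parameter `a` becoming the
variable `κ a`. -/
def Tm.abstract (ρ : ℕ → ℕ) (κ : ZFSet → ℕ) : Tm → Tm
  | Tm.var n => Tm.var (ρ n)
  | Tm.param a => Tm.var (κ a)
  | Tm.func s n a => Tm.func s n fun i => (a i).abstract ρ κ

/-- Renaming of the free variables of a formula along `ρ`, each parameter `a` becoming the
variable `κ a`. -/
def Fm.abstract : (ρ : ℕ → ℕ) → (κ : ZFSet → ℕ) → Fm → Fm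
  | ρ, κ, Fm.rel s n a => Fm.rel s n fun i => (a i).abstract ρ κ
  | ρ, κ, Fm.eq t u => Fm.eq (t.abstract ρ κ) (u.abstract ρ κ)
  | ρ, κ, Fm.not f => Fm.not (f.abstract ρ κ)
  | ρ, κ, Fm.imp f g => Fm.imp (f.abstract ρ κ) (g.abstract ρ κ)
  | ρ, κ, Fm.all f => Fm.all (f.abstract (liftVar ρ) fun a => κ a + 1)
  | ρ, κ, Fm.ex f => Fm.ex (f.abstract (liftVar ρ) fun a => κ a + 1)

section Abstract

variable {ρ : ℕ → ℕ} {κ : ZFSet → ℕ} {v w : ℕ → ZFSet.{0}}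

theorem Tm.eval_abstract {fI : ZFSet → List ZFSet → ZFSet} {t : Tm}
    (hv : ∀ n ∈ t.free, w (ρ n) = v n) (hp : ∀ a ∈ t.paramSet, w (κ a) = a) :
    (t.abstract ρ κ).eval fI w = t.eval fI v := by
  induction t with
  | var n => exact hv n rfl
  | param a => exact hp a rfl
  | func s n a ih =>
    simp only [Tm.abstract, Tm.eval,
      ih _ (fun n hn => hv n ⟨_, hn⟩) (fun b hb => hp b ⟨_, hb⟩)]

theorem Fm.sat_abstract {domP : ZFSet → Prop} {rI : ZFSet → List ZFSet → Prop}
    {fI : ZFSet → List ZFSet → ZFSet} {f : Fm} (hv : ∀ n ∈ f.free, w (ρ n) = v n)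
    (hp : ∀ a ∈ f.paramSet, w (κ a) = a) :
    Sat domP rI fI (f.abstract ρ κ) w ↔ Sat domP rI fI f v := by
  have lift_vars {S : Set ℕ} {ρ v w} (z : ZFSet) (h : ∀ n, n + 1 ∈ S → w (ρ n) = v n) :
      ∀ n ∈ S, vcons z w (liftVar ρ n) = vcons z v n
    | 0, _ => rfl
    | n + 1, hn => h n hn
  induction f generalizing ρ κ v w with
  | rel s n a =>
    simp only [Fm.abstract, Sat, Tm.eval_abstract (fun n hn => hv n ⟨_, hn⟩)
      (fun b hb => hp b ⟨_, hb⟩)]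
  | eq t u =>
    simp only [Fm.abstract, Sat,
      Tm.eval_abstract (fun n hn => hv n (.inl hn)) (fun b hb => hp b (.inl hb)),
      Tm.eval_abstract (fun n hn => hv n (.inr hn)) (fun b hb => hp b (.inr hb))]
  | not f ih => exact not_congr (ih hv hp)
  | imp f g ihf ihg =>
    exact imp_congr (ihf (fun n hn => hv n (.inl hn)) (fun b hb => hp b (.inl hb)))
      (ihg (fun n hn => hv n (.inr hn)) (fun b hb => hp b (.inr hb)))
  | all f ih => exact forall₂_congr fun z _ => ih (lift_vars z hv) hp
  | ex f ih => exact exists_congr fun z => and_congr_right fun _ => ih (lift_vars z hv) hp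

theorem Tm.noFunc.abstract {t : Tm} (h : t.noFunc) : (t.abstract ρ κ).noFunc := by
  cases t <;> exact h

theorem Fm.memOnly.abstract {f : Fm} (h : f.memOnly) : (f.abstract ρ κ).memOnly := by
  induction f generalizing ρ κ with
  | rel s n a => exact ⟨h.1, h.2.1, fun i => (h.2.2 i).abstract⟩
  | eq t u => exact ⟨h.1.abstract, h.2.abstract⟩
  | not f ih => exact ih h
  | imp f g ihf ihg => exact ⟨ihf h.1, ihg h.2⟩
  | all f ih => exact ih h
  | ex f ih => exact ih h

theorem Tm.paramSet_abstract (t : Tm) : (t.abstract ρ κ).paramSet = ∅ := by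
  induction t with
  | var n => rfl
  | param a => rfl
  | func s n a ih => simp only [Tm.abstract, Tm.paramSet, ih, Set.mem_empty_iff_false,
      exists_false, Set.ofPred_false]

theorem Fm.paramSet_abstract (f : Fm) : (f.abstract ρ κ).paramSet = ∅ := by
  induction f generalizing ρ κ with
  | rel s n a => simp only [Fm.abstract, Fm.paramSet, Tm.paramSet_abstract,
      Set.mem_empty_iff_false, exists_false, Set.ofPred_false]
  | eq t u => simp only [Fm.abstract, Fm.paramSet, Tm.paramSet_abstract, Set.union_empty]
  | not _ ih => exact ih
  | imp f g ihf ihg => simp only [Fm.abstract, Fm.paramSet, ihf, ihg, Set.union_empty]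
  | all _ ih => exact ih
  | ex _ ih => exact ih

variable {m : ℕ}

theorem Tm.notMem_free_abstract (hρ : ∀ n, ρ n ≠ m) (hκ : ∀ a, κ a ≠ m) (t : Tm) :
    m ∉ (t.abstract ρ κ).free := by
  induction t with
  | var n => exact (hρ n).symm
  | param a => exact (hκ a).symm
  | func _ n a ih => exact not_exists.2 ih

theorem Fm.notMem_free_abstract (hρ : ∀ n, ρ n ≠ m) (hκ : ∀ a, κ a ≠ m) (f : Fm) :
    m ∉ (f.abstract ρ κ).free := by
  have lift_ne {ρ m} (h : ∀ n, ρ n ≠ m) : ∀ n, liftVar ρ n ≠ m + 1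
    | 0 => (Nat.succ_ne_zero m).symm
    | n + 1 => fun e => h n (Nat.add_right_cancel e)
  induction f generalizing ρ κ m with
  | rel _ n a => exact not_exists.2 fun i => (a i).notMem_free_abstract hρ hκ
  | eq t u => exact not_or.2 ⟨t.notMem_free_abstract hρ hκ, u.notMem_free_abstract hρ hκ⟩
  | not _ ih => exact ih hρ hκ
  | imp f g ihf ihg => exact not_or.2 ⟨ihf hρ hκ, ihg hρ hκ⟩
  | all _ ih => exact ih (lift_ne hρ) fun a e => hκ a (Nat.add_right_cancel e)
  | ex _ ih => exact ih (lift_ne hρ) fun a e => hκ a (Nat.add_right_cancel e)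

end Abstract

/-- Trading parameters for variables: the parameters of `φ` and the value `x` of its variables
from the `k`-th on become the values `u` of the variables of `ψ` from `k + 2` on; the indices
`k` and `k + 1` are kept for the two sets quantified in Separation and Collection. -/
theorem Fm.exists_paramFree {φ : Fm} (hφ : φ.memOnly) (k : ℕ) {M x : ZFSet} (hx : x ∈ M)
    (hp : ∀ a ∈ φ.paramSet, a ∈ M) :
    ∃ ψ : Fm, ψ.memOnly ∧ ψ.paramSet = ∅ ∧ k ∉ ψ.free ∧
      ∃ (u : ℕ → ZFSet) (l : ℕ), (∀ i < l, u i ∈ M) ∧ (∀ n, u (n + l) = ∅) ∧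
        ∀ w : ℕ → ZFSet, (∀ n, w (n + (k + 2)) = u n) →
          (SatV M ψ w ↔ SatV M φ fun n => if n < k then w n else x) := by
  classical
  have hfin : (insert x φ.paramSet).Finite := φ.paramSet_finite.insert x
  set l : List ZFSet := hfin.toFinset.toList
  have mem_l {a : ZFSet} : a ∈ l ↔ a = x ∨ a ∈ φ.paramSet := by simp [l]
  have get_idx {a : ZFSet} (ha : a ∈ l) : l.getD (l.idxOf a) ∅ = a := by
    rw [List.getD_eq_getElem _ _ (List.idxOf_lt_length_iff.2 ha), List.getElem_idxOf]
  have mem_of_mem_l {a : ZFSet} (ha : a ∈ l) : a ∈ M :=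
    (mem_l.1 ha).elim (fun e => e ▸ hx) (hp a)
  let κ (a : ZFSet) : ℕ := l.idxOf a + (k + 2)
  let ρ (n : ℕ) : ℕ := if n < k then n else κ x
  refine ⟨φ.abstract ρ κ, hφ.abstract, φ.paramSet_abstract,
    φ.notMem_free_abstract (fun n => ?_) fun a => by simp only [κ]; omega,
    fun n => l.getD n ∅, l.length, fun i hi => ?_,
    fun n => List.getD_eq_default _ _ (by omega), fun w hw => ?_⟩
  · simp only [ρ, κ]; split_ifs <;> omega
  · simp only [List.getD_eq_getElem _ _ hi]
    exact mem_of_mem_l (List.getElem_mem hi)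
  · refine Fm.sat_abstract (fun n _ => ?_) fun a ha => (hw _).trans (get_idx (mem_l.2 (.inr ha)))
    by_cases h : n < k
    · simp only [ρ, h, if_true]
    · simp only [ρ, h, if_false]
      exact (hw _).trans (get_idx (mem_l.2 (.inl rfl)))

/-! ### Definability over a model -/

/-- `P` is definable over the structure `(M; ∈)`, with parameters from `M`; the arguments of
`P` are the entries of a valuation. -/
def Definable (M : ZFSet.{0}) (P : (ℕ → ZFSet.{0}) → Prop) : Prop :=
  ∃ φ : Fm, φ.memOnly ∧ (∀ a ∈ φ.paramSet, a ∈ M) ∧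
    ∀ v, (∀ i, v i ∈ M) → (SatV M φ v ↔ P v)

/-- `f` maps valuations in `M` to elements of `M` and has a definable graph. The arguments of
`f` may be taken from any variables `ρ`, so that closure under quantifiers needs no
substitution of formulas. -/
def DefinableFun (M : ZFSet.{0}) (f : (ℕ → ZFSet.{0}) → ZFSet.{0}) : Prop :=
  (∀ v, (∀ i, v i ∈ M) → f v ∈ M) ∧
    ∀ ρ : ℕ → ℕ, Definable M fun v => v 0 = f fun n => v (ρ n)

section Definable

variable {M : ZFSet.{0}} {P Q : (ℕ → ZFSet.{0}) → Prop} {f g : (ℕ → ZFSet.{0}) → ZFSet.{0}}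

theorem vcons_mem {z : ZFSet} {v : ℕ → ZFSet} (hz : z ∈ M) (hv : ∀ i, v i ∈ M) :
    ∀ i, vcons z v i ∈ M
  | 0 => hz
  | i + 1 => hv i

namespace Definable

theorem congr (hP : Definable M P) (h : ∀ v, (∀ i, v i ∈ M) → (Q v ↔ P v)) : Definable M Q :=
  let ⟨φ, hφ, hp, hs⟩ := hP
  ⟨φ, hφ, hp, fun v hv => (hs v hv).trans (h v hv).symm⟩

theorem not (hP : Definable M P) : Definable M fun v => ¬ P v :=
  let ⟨φ, hφ, hp, hs⟩ := hP
  ⟨φ.not, hφ, hp, fun v hv => not_congr (hs v hv)⟩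

theorem imp (hP : Definable M P) (hQ : Definable M Q) : Definable M fun v => P v → Q v :=
  let ⟨φ, hφ, hp, hs⟩ := hP
  let ⟨ψ, hψ, hq, ht⟩ := hQ
  ⟨φ.imp ψ, ⟨hφ, hψ⟩, fun a ha => ha.elim (hp a) (hq a),
    fun v hv => imp_congr (hs v hv) (ht v hv)⟩

theorem and (hP : Definable M P) (hQ : Definable M Q) : Definable M fun v => P v ∧ Q v :=
  (hP.imp hQ.not).not.congr fun _ _ => by tauto

theorem or (hP : Definable M P) (hQ : Definable M Q) : Definable M fun v => P v ∨ Q v :=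
  (hP.not.imp hQ).congr fun _ _ => by tauto

theorem iff (hP : Definable M P) (hQ : Definable M Q) : Definable M fun v => P v ↔ Q v :=
  ((hP.imp hQ).and (hQ.imp hP)).congr fun _ _ => by tauto

theorem ex {Q : ZFSet → (ℕ → ZFSet) → Prop}
    (hQ : Definable M fun w => Q (w 0) fun n => w (n + 1)) :
    Definable M fun v => ∃ z ∈ M, Q z v :=
  let ⟨φ, hφ, hp, hs⟩ := hQ
  ⟨φ.ex, hφ, hp, fun _ hv =>
    exists_congr fun _ => and_congr_right fun hz => hs _ (vcons_mem hz hv)⟩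

theorem all {Q : ZFSet → (ℕ → ZFSet) → Prop}
    (hQ : Definable M fun w => Q (w 0) fun n => w (n + 1)) :
    Definable M fun v => ∀ z ∈ M, Q z v :=
  let ⟨φ, hφ, hp, hs⟩ := hQ
  ⟨φ.all, hφ, hp, fun _ hv => forall₂_congr fun _ hz => hs _ (vcons_mem hz hv)⟩

theorem subst {Q : ZFSet → (ℕ → ZFSet) → Prop} (hf : DefinableFun M f)
    (hQ : Definable M fun w => Q (w 0) fun n => w (n + 1)) : Definable M fun v => Q (f v) v :=
  ((hf.2 (· + 1)).and hQ).ex (Q := fun z v => z = f v ∧ Q z v) |>.congr fun v hv =>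
    ⟨fun h => ⟨f v, hf.1 v hv, rfl, h⟩, fun ⟨_, _, e, h⟩ => e ▸ h⟩

theorem var_mem_var (i j : ℕ) : Definable M fun v => v i ∈ v j :=
  ⟨mem2 i j, ⟨rfl, rfl, fun k => by fin_cases k <;> trivial⟩,
    fun _ ⟨k, hk⟩ => by fin_cases k <;> exact hk.elim, fun _ _ => sat_mem2 i j⟩

theorem var_eq_var (i j : ℕ) : Definable M fun v => v i = v j :=
  ⟨eq2 i j, ⟨trivial, trivial⟩, fun _ h => h.elim False.elim False.elim, fun _ _ => Iff.rfl⟩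

end Definable

namespace DefinableFun

theorem var (i : ℕ) : DefinableFun M fun v => v i :=
  ⟨fun _ hv => hv i, fun ρ => Definable.var_eq_var 0 (ρ i)⟩

theorem const {a : ZFSet} (ha : a ∈ M) : DefinableFun M fun _ => a :=
  ⟨fun _ _ => ha, fun _ => ⟨Fm.eq (Tm.var 0) (Tm.param a), ⟨trivial, trivial⟩,
    fun _ h => h.elim False.elim fun e => e ▸ ha, fun _ _ => Iff.rfl⟩⟩

theorem rename (hf : DefinableFun M f) (ρ : ℕ → ℕ) : DefinableFun M fun v => f fun n => v (ρ n) :=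
  ⟨fun _ hv => hf.1 _ fun n => hv (ρ n), fun τ => hf.2 (τ ∘ ρ)⟩

end DefinableFun

namespace Definable

theorem comp₂ {R : ZFSet → ZFSet → Prop} (hR : Definable M fun v => R (v 0) (v 1))
    (hf : DefinableFun M f) (hg : DefinableFun M g) : Definable M fun v => R (f v) (g v) :=
  subst (Q := fun b v => R (f v) b) hg
    (subst (Q := fun a w => R a (w 0)) (hf.rename (· + 1)) hR)

theorem mem (hf : DefinableFun M f) (hg : DefinableFun M g) : Definable M fun v => f v ∈ g v :=
  comp₂ (R := (· ∈ ·)) (var_mem_var 0 1) hf hg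

theorem eq (hf : DefinableFun M f) (hg : DefinableFun M g) : Definable M fun v => f v = g v :=
  comp₂ (R := (· = ·)) (var_eq_var 0 1) hf hg

end Definable

theorem DefinableFun.comp {G : ZFSet → ZFSet} (hG : DefinableFun M fun v => G (v 0))
    (hf : DefinableFun M f) : DefinableFun M fun v => G (f v) :=
  ⟨fun v hv => hG.1 (fun _ => f v) fun _ => hf.1 v hv, fun ρ =>
    Definable.subst (Q := fun a v => v 0 = G a) (hf.rename ρ) (.eq (.var 1) hG)⟩

variable (hM : M.IsTransitive)
include hM

theorem Definable.bex {Q : ZFSet → (ℕ → ZFSet) → Prop} (hf : DefinableFun M f)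
    (hQ : Definable M fun w => Q (w 0) fun n => w (n + 1)) :
    Definable M fun v => ∃ z ∈ f v, Q z v :=
  ((mem (.var 0) (hf.rename (· + 1))).and hQ).ex (Q := fun z v => z ∈ f v ∧ Q z v) |>.congr
    fun v hv => ⟨fun ⟨z, hz, h⟩ => ⟨z, hM _ (hf.1 v hv) hz, hz, h⟩, fun ⟨z, _, h⟩ => ⟨z, h⟩⟩

theorem Definable.ball {Q : ZFSet → (ℕ → ZFSet) → Prop} (hf : DefinableFun M f)
    (hQ : Definable M fun w => Q (w 0) fun n => w (n + 1)) :
    Definable M fun v => ∀ z ∈ f v, Q z v :=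
  (bex (Q := fun z v => ¬ Q z v) hM hf hQ.not).not.congr fun _ _ => by push Not; rfl

theorem Definable.transitive (hf : DefinableFun M f) :
    Definable M fun v => (f v).IsTransitive :=
  ball hM hf (ball (Q := fun z w => z ∈ f fun n => w (n + 1)) hM (.var 0)
    (.mem (.var 0) (hf.rename (· + 2))))

theorem Definable.isOrd (hf : DefinableFun M f) : Definable M fun v => IsOrd (f v) :=
  (transitive hM hf).and (ball hM hf (transitive hM (.var 0)))

theorem DefinableFun.of_mem (hfM : ∀ v, (∀ i, v i ∈ M) → f v ∈ M)
    (h : ∀ ρ : ℕ → ℕ, Definable M fun w => w 0 ∈ f fun n => w (ρ n)) : DefinableFun M f :=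
  ⟨hfM, fun ρ => (Definable.all (Q := fun z v => z ∈ v 0 ↔ z ∈ f fun n => v (ρ n))
      ((Definable.mem (.var 0) (.var 1)).iff (h fun n => ρ n + 1))).congr fun _ hv =>
    ⟨fun e _ _ => e ▸ Iff.rfl, fun hz => ZFSet.ext fun z =>
      ⟨fun h => (hz z (hM _ (hv 0) h)).1 h,
        fun h => (hz z (hM _ (hfM _ fun _ => hv _) h)).2 h⟩⟩⟩

end Definable

/-! ### Closure properties of transitive models -/

theorem mem_zimage {G : ZFSet → ZFSet} {x y : ZFSet} : y ∈ zimage G x ↔ ∃ z ∈ x, G z = y :=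
  @ZFSet.mem_image G (Classical.allZFSetDefinable _) x y

namespace IsTransModel

variable {M : ZFSet.{0}} (hM : IsTransModel M) {x y : ZFSet.{0}}
include hM

theorem mem_of_mem (hx : x ∈ M) (hy : y ∈ x) : y ∈ M := hM.1 _ hx hy

theorem sep_mem {P : ZFSet → Prop} (hP : Definable M fun v => P (v 0)) (hx : x ∈ M) :
    ZFSet.sep P x ∈ M := by
  obtain ⟨φ, hφ, hp, hs⟩ := hP
  obtain ⟨ψ, hψ, hψp, hψf, u, l, hu, hul, hsat⟩ := Fm.exists_paramFree hφ 1 hx hp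
  have separation : SatV M (sepBody ψ) u :=
    sat_of_allClose l (hM.2 _ (.inl (.inr ⟨l, ψ, hψ, hψp, hψf, rfl⟩))) hu hul
  obtain ⟨s, hs', h⟩ := separation x hx
  have mem_s {z : ZFSet} (hz : z ∈ M) : z ∈ s ↔ z ∈ x ∧ P z := by
    have := sat_iff.1 (h z hz)
    rw [sat_and, sat_mem2, sat_mem2, hsat _ fun _ => rfl, hs _ fun i => by
      split_ifs with hi
      exacts [Nat.lt_one_iff.1 hi ▸ hz, hx]] at this
    exact this
  rwa [show ZFSet.sep P x = s from ZFSet.ext fun z => ZFSet.mem_sep.trans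
    ⟨fun hz => (mem_s (hM.mem_of_mem hx hz.1)).2 hz,
      fun hz => (mem_s (hM.mem_of_mem hs' hz)).1 hz⟩]

theorem exists_collection {R : ZFSet → ZFSet → Prop} (hR : Definable M fun v => R (v 1) (v 0))
    (hx : x ∈ M) (h : ∀ y ∈ x, ∃ z ∈ M, R y z) : ∃ b ∈ M, ∀ y ∈ x, ∃ z ∈ b, R y z := by
  obtain ⟨φ, hφ, hp, hs⟩ := hR
  obtain ⟨ψ, hψ, hψp, hψf, u, l, hu, hul, hsat⟩ := Fm.exists_paramFree hφ 2 hx hp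
  have collection : SatV M (repBody ψ) u :=
    sat_of_allClose l (hM.2 _ (.inr ⟨l, ψ, hψ, hψp, hψf, rfl⟩)) hu hul
  obtain ⟨b, hb, hbody⟩ := collection x hx
  have sat_ψ {y z : ZFSet} (hy : y ∈ M) (hz : z ∈ M) :
      SatV M ψ (vcons z (vcons y (vcons b (vcons x u)))) ↔ R y z := by
    rw [hsat _ fun _ => rfl, hs _ fun i => by
      split_ifs with hi
      · interval_cases i <;> assumption
      · exact hx]
    rfl
  refine ⟨b, hb, fun y hy => ?_⟩
  have hyM := hM.mem_of_mem hx hy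
  obtain ⟨z₀, hz₀, h₀⟩ := h y hy
  obtain ⟨z, hz, hzb⟩ := hbody y hyM ((sat_mem2 0 2).2 hy) ⟨z₀, hz₀, (sat_ψ hyM hz₀).2 h₀⟩
  obtain ⟨hzb, hRz⟩ := sat_and.1 hzb
  exact ⟨z, (sat_mem2 0 2).1 hzb, (sat_ψ hyM hz).1 hRz⟩

theorem image_mem {G : ZFSet → ZFSet} (hG : DefinableFun M fun v => G (v 0)) (hx : x ∈ M) :
    zimage G x ∈ M := by
  obtain ⟨b, hb, hxb⟩ := hM.exists_collection (R := fun z y => G z = y)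
    (.eq (hG.comp (.var 1)) (.var 0)) hx
    fun z hz => ⟨G z, hG.1 (fun _ => z) fun _ => hM.mem_of_mem hx hz, rfl⟩
  have : zimage G x = ZFSet.sep (fun y => ∃ z ∈ x, G z = y) b := by
    ext y
    rw [mem_zimage, ZFSet.mem_sep]
    refine ⟨fun ⟨z, hz, e⟩ => ?_, And.right⟩
    obtain ⟨y', hy', rfl⟩ := hxb z hz
    exact e ▸ ⟨hy', z, hz, rfl⟩
  rw [this]
  exact hM.sep_mem (.bex (Q := fun z v => G z = v 0) hM.1 (.const hx) (.eq hG (.var 1))) hb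

theorem insert_singleton_mem (hx : x ∈ M) (hy : y ∈ M) : ({x, y} : ZFSet) ∈ M := by
  have pairing : SatV M pairAx fun _ => ∅ := hM.2 _ (.inl (.inl (by simp)))
  obtain ⟨p, hp, h⟩ := pairing x hx y hy
  obtain ⟨hxp, hyp⟩ := sat_and.1 h
  have hxp : x ∈ p := (sat_mem2 _ _).1 hxp
  have hyp : y ∈ p := (sat_mem2 _ _).1 hyp
  have : ZFSet.sep (fun z => z = x ∨ z = y) p = {x, y} := by
    ext z
    rw [ZFSet.mem_sep, ZFSet.mem_insert_iff, ZFSet.mem_singleton]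
    exact ⟨And.right, fun h => ⟨h.elim (· ▸ hxp) (· ▸ hyp), h⟩⟩
  exact this ▸ hM.sep_mem (.or (.eq (.var 0) (.const hx)) (.eq (.var 0) (.const hy))) hp

theorem singleton_mem (hx : x ∈ M) : ({x} : ZFSet) ∈ M := by
  simpa only [ZFSet.pair_eq_singleton] using hM.insert_singleton_mem hx hx

theorem pair_mem (hx : x ∈ M) (hy : y ∈ M) : ZFSet.pair x y ∈ M :=
  hM.insert_singleton_mem (hM.singleton_mem hx) (hM.insert_singleton_mem hx hy)

theorem sUnion_mem (hx : x ∈ M) : x.sUnion ∈ M := by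
  have union : SatV M unionAx fun _ => ∅ := hM.2 _ (.inl (.inl (by simp)))
  obtain ⟨p, hp, h⟩ := union x hx
  have : ZFSet.sep (fun z => ∃ y ∈ x, z ∈ y) p = x.sUnion := by
    ext z
    rw [ZFSet.mem_sep, ZFSet.mem_sUnion]
    refine ⟨And.right, fun h' => ⟨?_, h'⟩⟩
    obtain ⟨y, hy, hz⟩ := h'
    have hyM := hM.mem_of_mem hx hy
    exact (sat_mem2 _ _).1 (h z (hM.mem_of_mem hyM hz) y hyM
      (sat_and.2 ⟨(sat_mem2 _ _).2 hz, (sat_mem2 _ _).2 hy⟩))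
  exact this ▸ hM.sep_mem (.bex (Q := fun y v => v 0 ∈ y) hM.1 (.const hx)
    (.mem (.var 1) (.var 0))) hp

theorem union_mem (hx : x ∈ M) (hy : y ∈ M) : x ∪ y ∈ M :=
  hM.sUnion_mem (hM.insert_singleton_mem hx hy)

theorem insert_mem (hx : x ∈ M) (hy : y ∈ M) : insert x y ∈ M := by
  have : insert x y = {x} ∪ y := by ext; simp
  exact this ▸ hM.union_mem (hM.singleton_mem hx) hy

theorem diff_mem (hx : x ∈ M) (hy : y ∈ M) : x \ y ∈ M := by
  rw [← ZFSet.sep_notMem]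
  exact hM.sep_mem (Definable.not (.mem (.var 0) (.const hy))) hx

theorem exists_powerset (hx : x ∈ M) : ∃ p ∈ M, ∀ s ∈ M, s ⊆ x → s ∈ p := by
  have power : SatV M powAx fun _ => ∅ := hM.2 _ (.inl (.inl (by simp)))
  obtain ⟨p, hp, h⟩ := power x hx
  refine ⟨p, hp, fun s hs hsx => (sat_mem2 _ _).1 (h s hs fun z _ hz => ?_)⟩
  exact (sat_mem2 _ _).2 (hsx ((sat_mem2 _ _).1 hz))

end IsTransModel

namespace DefinableFun

variable {M : ZFSet.{0}} (hM : IsTransModel M) {f g : (ℕ → ZFSet.{0}) → ZFSet.{0}}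
include hM

theorem insert_singleton (hf : DefinableFun M f) (hg : DefinableFun M g) :
    DefinableFun M fun v => ({f v, g v} : ZFSet) :=
  .of_mem hM.1 (fun v hv => hM.insert_singleton_mem (hf.1 v hv) (hg.1 v hv)) fun ρ =>
    (Definable.or (.eq (.var 0) (hf.rename ρ)) (.eq (.var 0) (hg.rename ρ))).congr
      fun _ _ => by rw [ZFSet.mem_insert_iff, ZFSet.mem_singleton]

theorem singleton (hf : DefinableFun M f) : DefinableFun M fun v => ({f v} : ZFSet) := by
  simpa only [ZFSet.pair_eq_singleton] using insert_singleton hM hf hf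

theorem pair (hf : DefinableFun M f) (hg : DefinableFun M g) :
    DefinableFun M fun v => ZFSet.pair (f v) (g v) :=
  insert_singleton hM (singleton hM hf) (insert_singleton hM hf hg)

theorem sUnion (hf : DefinableFun M f) : DefinableFun M fun v => (f v).sUnion :=
  .of_mem hM.1 (fun v hv => hM.sUnion_mem (hf.1 v hv)) fun ρ =>
    (Definable.bex (Q := fun y v => v 0 ∈ y) hM.1 (hf.rename ρ)
      (.mem (.var 1) (.var 0))).congr fun _ _ => ZFSet.mem_sUnion

theorem diff (hf : DefinableFun M f) (hg : DefinableFun M g) : DefinableFun M fun v => f v \ g v :=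
  .of_mem hM.1 (fun v hv => hM.diff_mem (hf.1 v hv) (hg.1 v hv)) fun ρ =>
    (Definable.and (.mem (.var 0) (hf.rename ρ)) (.not (.mem (.var 0) (hg.rename ρ)))).congr
      fun _ _ => ZFSet.mem_sdiff

end DefinableFun

namespace IsTransModel

variable {M : ZFSet.{0}} (hM : IsTransModel M) {x y : ZFSet.{0}}
include hM

theorem mem_of_pair_mem (h : ZFSet.pair x y ∈ M) : x ∈ M ∧ y ∈ M := by
  have hxy : ({x, y} : ZFSet) ∈ M := hM.mem_of_mem h (by simp [ZFSet.pair])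
  exact ⟨hM.mem_of_mem hxy (by simp), hM.mem_of_mem hxy (by simp)⟩

theorem prod_mem (hx : x ∈ M) (hy : y ∈ M) : ZFSet.prod x y ∈ M := by
  obtain ⟨p, hp, hpx⟩ := hM.exists_powerset (hM.union_mem hx hy)
  obtain ⟨q, hq, hqp⟩ := hM.exists_powerset hp
  have : ZFSet.sep (fun z => ∃ a ∈ x, ∃ b ∈ y, z = ZFSet.pair a b) q = ZFSet.prod x y := by
    ext z
    rw [ZFSet.mem_sep, ZFSet.mem_prod]
    refine ⟨And.right, fun h => ⟨?_, h⟩⟩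
    obtain ⟨a, ha, b, hb, rfl⟩ := h
    have haM := hM.mem_of_mem hx ha
    have hbM := hM.mem_of_mem hy hb
    refine hqp _ (hM.pair_mem haM hbM) fun s hs => ?_
    rcases (by simpa [ZFSet.pair] using hs : s = {a} ∨ s = {a, b}) with rfl | rfl
    · exact hpx _ (hM.singleton_mem haM) (by simp [ZFSet.subset_def, ha])
    · exact hpx _ (hM.insert_singleton_mem haM hbM) (by simp [ZFSet.subset_def, ha, hb])
  exact this ▸ hM.sep_mem (.bex (Q := fun a v => ∃ b ∈ y, v 0 = ZFSet.pair a b) hM.1 (.const hx)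
    (.bex (Q := fun b v => v 1 = ZFSet.pair (v 0) b) hM.1 (.const hy)
      (.eq (.var 2) (.pair hM (.var 1) (.var 0))))) hq

theorem exists_transitive (hx : x ∈ M) : ∃ t ∈ M, t.IsTransitive ∧ x ∈ t := by
  induction x using ZFSet.inductionOn with | h x ih
  obtain ⟨b, hb, hxb⟩ := hM.exists_collection (R := fun y t => t.IsTransitive ∧ y ∈ t)
    (.and (.transitive hM.1 (.var 0)) (.mem (.var 1) (.var 0))) hx
    fun y hy => ih y hy (hM.mem_of_mem hx hy)
  set t := (ZFSet.sep ZFSet.IsTransitive b).sUnion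
  have htM : t ∈ M := hM.sUnion_mem (hM.sep_mem (.transitive hM.1 (.var 0)) hb)
  have ht_trans : t.IsTransitive := ZFSet.IsTransitive.sUnion' fun s hs => (ZFSet.mem_sep.1 hs).2
  have hxt : x ⊆ t := fun y hy =>
    let ⟨s, hs, hst, hys⟩ := hxb y hy
    ZFSet.mem_sUnion.2 ⟨s, ZFSet.mem_sep.2 ⟨hs, hst⟩, hys⟩
  refine ⟨insert x t, hM.insert_mem hx htM, fun y hy z hz => ZFSet.mem_insert_of_mem _ ?_,
    ZFSet.mem_insert x t⟩
  rcases ZFSet.mem_insert_iff.1 hy with rfl | hy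
  exacts [hxt hz, ht_trans y hy hz]

end IsTransModel

theorem DefinableFun.prod {M : ZFSet.{0}} (hM : IsTransModel M)
    {f g : (ℕ → ZFSet.{0}) → ZFSet.{0}} (hf : DefinableFun M f) (hg : DefinableFun M g) :
    DefinableFun M fun v => ZFSet.prod (f v) (g v) :=
  .of_mem hM.1 (fun v hv => hM.prod_mem (hf.1 v hv) (hg.1 v hv)) fun ρ =>
    (Definable.bex (Q := fun a v => ∃ b ∈ g fun n => v (ρ n), v 0 = ZFSet.pair a b) hM.1
      (hf.rename ρ) (.bex (Q := fun b v => v 1 = ZFSet.pair (v 0) b) hM.1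
        (hg.rename fun n => ρ n + 1) (.eq (.var 2) (.pair hM (.var 1) (.var 0))))).congr
      fun _ _ => ZFSet.mem_prod

/-! ### Definition by recursion inside a model -/

section Recursion

/-- `p` is a pair `(x, G s)` where `s` is the image of `pred x` under the relation `h`, all of
`pred x` being in the domain of `h`. -/
def IsRecursionStep (M : ZFSet) (G pred : ZFSet → ZFSet) (h p : ZFSet) : Prop :=
  ∃ x ∈ M, ∃ s ∈ M, p = ZFSet.pair x (G s) ∧
    (∀ y ∈ pred x, ∃ w ∈ s, ZFSet.pair y w ∈ h) ∧ ∀ w ∈ s, ∃ y ∈ pred x, ZFSet.pair y w ∈ h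

/-- A partial solution `h` of the recursion `F x = G (F '' pred x)`. -/
def IsAttempt (M : ZFSet) (G pred : ZFSet → ZFSet) (h : ZFSet) : Prop :=
  ∀ p ∈ h, IsRecursionStep M G pred h p

variable {M : ZFSet.{0}} {G pred F : ZFSet.{0} → ZFSet.{0}} {h h' p x z : ZFSet.{0}}

theorem exists_recursion (G pred : ZFSet → ZFSet) (wf : WellFounded fun y x => y ∈ pred x) :
    ∃ F : ZFSet → ZFSet, ∀ x, F x = G (zimage F (pred x)) := by
  classical
  let step (x : ZFSet) (ih : ∀ y, y ∈ pred x → ZFSet) : ZFSet :=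
    G (zimage (fun y => if hy : y ∈ pred x then ih y hy else ∅) (pred x))
  refine ⟨wf.fix step, fun x => ?_⟩
  rw [wf.fix_eq]
  refine congrArg G (ZFSet.ext fun w => ?_)
  simp only [mem_zimage]
  exact exists_congr fun y => and_congr_right fun hy => by rw [dif_pos hy]

theorem IsRecursionStep.mono (hp : IsRecursionStep M G pred h p) (hh : h ⊆ h') :
    IsRecursionStep M G pred h' p :=
  let ⟨x, hx, s, hs, e, hpred, hsub⟩ := hp
  ⟨x, hx, s, hs, e, fun y hy => (hpred y hy).imp fun _ hw => ⟨hw.1, hh hw.2⟩,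
    fun w hw => (hsub w hw).imp fun _ hy => ⟨hy.1, hh hy.2⟩⟩

theorem IsAttempt.sUnion (hh : ∀ a ∈ h, IsAttempt M G pred a) : IsAttempt M G pred h.sUnion :=
  fun p hp =>
    let ⟨a, ha, hpa⟩ := ZFSet.mem_sUnion.1 hp
    (hh a ha p hpa).mono fun _ hq => ZFSet.mem_sUnion_of_mem hq ha

theorem IsAttempt.insert (hh : IsAttempt M G pred h) (hp : IsRecursionStep M G pred h p) :
    IsAttempt M G pred (insert p h) := fun q hq =>
  have hsub : h ⊆ Insert.insert p h := fun _ => ZFSet.mem_insert_of_mem _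
  (ZFSet.mem_insert_iff.1 hq).elim (fun e => e ▸ hp.mono hsub) fun hq => (hh q hq).mono hsub

theorem IsAttempt.eq_of_pair_mem (wf : WellFounded fun y x => y ∈ pred x)
    (hF : ∀ x, F x = G (zimage F (pred x))) (hh : IsAttempt M G pred h)
    (hxz : ZFSet.pair x z ∈ h) : z = F x := by
  induction x using wf.induction generalizing z with | h x ih
  obtain ⟨x', -, s, -, e, hpred, hsub⟩ := hh _ hxz
  obtain ⟨rfl, rfl⟩ := ZFSet.pair_inj.1 e
  rw [hF x]
  refine congrArg G (ZFSet.ext fun w => mem_zimage.symm.subst ⟨fun hw => ?_, ?_⟩)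
  · obtain ⟨y, hy, hyw⟩ := hsub w hw
    exact ⟨y, hy, (ih y hy hyw).symm⟩
  · rintro ⟨y, hy, rfl⟩
    obtain ⟨w, hw, hyw⟩ := hpred y hy
    exact ih y hy hyw ▸ hw

variable (hM : IsTransModel M) (hG : DefinableFun M fun v => G (v 0))
  (hpred : DefinableFun M fun v => pred (v 0))
include hM hG hpred

theorem Definable.isAttempt : Definable M fun v => IsAttempt M G pred (v 0) :=
  .ball (Q := fun p v => IsRecursionStep M G pred (v 0) p) hM.1 (.var 0) <|
  .ex (Q := fun x v => ∃ s ∈ M, v 0 = ZFSet.pair x (G s) ∧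
    (∀ y ∈ pred x, ∃ w ∈ s, ZFSet.pair y w ∈ v 1) ∧
      ∀ w ∈ s, ∃ y ∈ pred x, ZFSet.pair y w ∈ v 1) <|
  .ex (Q := fun s v => v 1 = ZFSet.pair (v 0) (G s) ∧
    (∀ y ∈ pred (v 0), ∃ w ∈ s, ZFSet.pair y w ∈ v 2) ∧
      ∀ w ∈ s, ∃ y ∈ pred (v 0), ZFSet.pair y w ∈ v 2) <|
  .and (.eq (.var 2) (.pair hM (.var 1) hG)) <| .and
    (.ball (Q := fun y v => ∃ w ∈ v 0, ZFSet.pair y w ∈ v 3) hM.1 (hpred.comp (.var 1)) <|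
      .bex (Q := fun w v => ZFSet.pair (v 0) w ∈ v 4) hM.1 (.var 1) <|
        .mem (.pair hM (.var 1) (.var 0)) (.var 5))
    (.ball (Q := fun w v => ∃ y ∈ pred (v 1), ZFSet.pair y w ∈ v 3) hM.1 (.var 0) <|
      .bex (Q := fun y v => ZFSet.pair y (v 0) ∈ v 4) hM.1 (hpred.comp (.var 2)) <|
        .mem (.pair hM (.var 0) (.var 1)) (.var 5))

theorem exists_attempt (wf : WellFounded fun y x => y ∈ pred x) (hx : x ∈ M) :
    ∃ h ∈ M, IsAttempt M G pred h ∧ ∃ z ∈ M, ZFSet.pair x z ∈ h := by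
  induction x using wf.induction with | h x ih
  have hpx : pred x ∈ M := hpred.1 (fun _ => x) fun _ => hx
  obtain ⟨b, hb, hxb⟩ := hM.exists_collection
    (R := fun y h => IsAttempt M G pred h ∧ ∃ z ∈ M, ZFSet.pair y z ∈ h)
    (.and (.isAttempt hM hG hpred) (.ex (Q := fun z v => ZFSet.pair (v 1) z ∈ v 0)
      (.mem (.pair hM (.var 2) (.var 0)) (.var 1)))) hpx
    fun y hy => ih y hy (hM.mem_of_mem hpx hy)
  set h := (ZFSet.sep (IsAttempt M G pred) b).sUnion
  have hhM : h ∈ M := hM.sUnion_mem (hM.sep_mem (.isAttempt hM hG hpred) hb)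
  have hh : IsAttempt M G pred h := .sUnion fun a ha => (ZFSet.mem_sep.1 ha).2
  have domain_h : ∀ y ∈ pred x, ∃ w, ZFSet.pair y w ∈ h := fun y hy =>
    let ⟨a, hab, ha, w, _, hw⟩ := hxb y hy
    ⟨w, ZFSet.mem_sUnion_of_mem hw (ZFSet.mem_sep.2 ⟨hab, ha⟩)⟩
  set s := ZFSet.sep (fun w => ∃ y ∈ pred x, ZFSet.pair y w ∈ h) h.sUnion.sUnion
  have hsM : s ∈ M := hM.sep_mem
    (.bex (Q := fun y v => ZFSet.pair y (v 0) ∈ h) hM.1 (.const hpx)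
      (.mem (.pair hM (.var 0) (.var 1)) (.const hhM))) (hM.sUnion_mem (hM.sUnion_mem hhM))
  have mem_s {y w} (hy : y ∈ pred x) (hw : ZFSet.pair y w ∈ h) : w ∈ s :=
    ZFSet.mem_sep.2 ⟨ZFSet.mem_sUnion_of_mem (ZFSet.mem_pair.2 (.inr rfl))
      (ZFSet.mem_sUnion_of_mem (ZFSet.mem_pair.2 (.inr rfl)) hw), y, hy, hw⟩
  have hGs : G s ∈ M := hG.1 (fun _ => s) fun _ => hsM
  refine ⟨insert (ZFSet.pair x (G s)) h, hM.insert_mem (hM.pair_mem hx hGs) hhM,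
    hh.insert ⟨x, hx, s, hsM, rfl, fun y hy => ?_, fun w hw => (ZFSet.mem_sep.1 hw).2⟩,
    G s, hGs, ZFSet.mem_insert _ _⟩
  exact (domain_h y hy).imp fun w hw => ⟨mem_s hy hw, hw⟩

theorem DefinableFun.of_recursion (wf : WellFounded fun y x => y ∈ pred x)
    (hF : ∀ x, F x = G (zimage F (pred x))) : DefinableFun M fun v => F (v 0) := by
  have graph {x z : ZFSet} (hx : x ∈ M) :
      (∃ h ∈ M, IsAttempt M G pred h ∧ ZFSet.pair x z ∈ h) ↔ z = F x := by
    refine ⟨fun ⟨h, _, hh, hxz⟩ => hh.eq_of_pair_mem wf hF hxz, ?_⟩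
    rintro rfl
    obtain ⟨h, hhM, hh, z, -, hxz⟩ := exists_attempt hM hG hpred wf hx
    exact ⟨h, hhM, hh, hh.eq_of_pair_mem wf hF hxz ▸ hxz⟩
  refine ⟨fun v hv => ?_, fun ρ => ?_⟩
  · obtain ⟨h, hhM, -, hxz⟩ := (graph (hv 0)).2 rfl
    exact (hM.mem_of_pair_mem (hM.mem_of_mem hhM hxz)).2
  · exact (Definable.ex (Q := fun h v => IsAttempt M G pred h ∧ ZFSet.pair (v (ρ 0)) (v 0) ∈ h)
      (.and (.isAttempt hM hG hpred) (.mem (.pair hM (.var (ρ 0 + 1)) (.var 1)) (.var 0)))).congr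
        fun v hv => (graph (hv (ρ 0))).symm

end Recursion

/-! ### Well-ordering inside a model -/

theorem isOrd_iff_isOrdinal {x : ZFSet} : IsOrd x ↔ x.IsOrdinal :=
  ZFSet.isOrdinal_iff_forall_mem_isTransitive.symm

theorem IsOrd.mem {x y : ZFSet} (hx : IsOrd x) (hy : y ∈ x) : IsOrd y :=
  isOrd_iff_isOrdinal.2 ((isOrd_iff_isOrdinal.1 hx).mem hy)

theorem IsOrd.mem_trichotomous {x y : ZFSet} (hx : IsOrd x) (hy : IsOrd y) :
    x ∈ y ∨ x = y ∨ y ∈ x :=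
  (isOrd_iff_isOrdinal.1 hx).mem_trichotomous (isOrd_iff_isOrdinal.1 hy)

/-- The set of pairs in `x × y` whose components are related by `R`. -/
def graphOn (R : ZFSet → ZFSet → Prop) (x y : ZFSet) : ZFSet :=
  ZFSet.sep (fun q => ∃ a ∈ x, ∃ b ∈ y, q = ZFSet.pair a b ∧ R a b) (ZFSet.prod x y)

theorem graphOn_subset {R : ZFSet → ZFSet → Prop} {x y : ZFSet} :
    graphOn R x y ⊆ ZFSet.prod x y :=
  fun _ hq => (ZFSet.mem_sep.1 hq).1

theorem pair_mem_graphOn {R : ZFSet → ZFSet → Prop} {x y a b : ZFSet} :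
    ZFSet.pair a b ∈ graphOn R x y ↔ a ∈ x ∧ b ∈ y ∧ R a b := by
  rw [graphOn, ZFSet.mem_sep, ZFSet.pair_mem_prod]
  refine ⟨fun ⟨_, a', ha, b', hb, e, h⟩ => ?_,
    fun ⟨ha, hb, h⟩ => ⟨⟨ha, hb⟩, a, ha, b, hb, rfl, h⟩⟩
  obtain ⟨rfl, rfl⟩ := ZFSet.pair_inj.1 e
  exact ⟨ha, hb, h⟩

/-- `r` relates every element of `x` to some element of `a`, and no element of `a` is related
to two elements of `x`: a multivalued injection of `x` into `a`. -/
structure InjRel (r x a : ZFSet) : Prop where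
  total : ∀ p ∈ x, ∃ β ∈ a, ZFSet.pair p β ∈ r
  inj : ∀ p ∈ x, ∀ p' ∈ x, ∀ β ∈ a, ZFSet.pair p β ∈ r → ZFSet.pair p' β ∈ r → p = p'

theorem ZInjFun.injRel {j a b : ZFSet} (hj : ZInjFun j a b) : InjRel j a b := by
  obtain ⟨⟨-, hfun⟩, hmap, hinj⟩ := hj
  have iapp_eq {s v : ZFSet} (hs : s ∈ a) (hv : ZFSet.pair s v ∈ j) : iapp j s = v :=
    (hfun s hs).unique (Classical.epsilon_spec (p := fun v => opair s v ∈ j) ⟨v, hv⟩) hv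
  refine ⟨fun s hs => ⟨iapp j s, hmap s hs, Classical.epsilon_spec (hfun s hs).exists⟩,
    fun s hs s' hs' β _ h h' => hinj s hs s' hs' ?_⟩
  rw [iapp_eq hs h, iapp_eq hs' h']

namespace IsTransModel

variable {M : ZFSet.{0}} (hM : IsTransModel M) {x y : ZFSet.{0}}
include hM

theorem graphOn_mem {R : ZFSet → ZFSet → Prop} (hR : Definable M fun v => R (v 1) (v 0))
    (hx : x ∈ M) (hy : y ∈ M) : graphOn R x y ∈ M :=
  hM.sep_mem (.bex (Q := fun a v => ∃ b ∈ y, v 0 = ZFSet.pair a b ∧ R a b) hM.1 (.const hx)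
    (.bex (Q := fun b v => v 1 = ZFSet.pair (v 0) b ∧ R (v 0) b) hM.1 (.const hy)
      (.and (.eq (.var 2) (.pair hM (.var 1) (.var 0))) hR))) (hM.prod_mem hx hy)

theorem exists_transversal (hx : x ∈ M) (hne : ∀ y ∈ x, y.Nonempty)
    (hdisj : ∀ y ∈ x, ∀ y' ∈ x, ∀ z ∈ y, z ∈ y' → y = y') :
    ∃ c ∈ M, ∀ y ∈ x, ∃ z ∈ y, z ∈ c ∧ ∀ w ∈ y, w ∈ c → w = z := by
  have choice : SatV M choiceAx fun _ => ∅ := hM.2 _ (.inl (.inl (by simp)))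
  simp only [choiceAx, sat_imp, sat_and, sat_all, sat_ex, sat_mem2, sat_eq2, vcons] at choice
  obtain ⟨c, hc, h⟩ := choice x hx
    ⟨fun y hy hyx => (hne y hyx).imp fun z hz => ⟨hM.mem_of_mem hy hz, hz⟩,
      fun y _ y' _ ⟨hy, hy', z, _, hz, hz'⟩ => hdisj y hy y' hy' z hz hz'⟩
  refine ⟨c, hc, fun y hy => ?_⟩
  have hyM := hM.mem_of_mem hx hy
  obtain ⟨z, -, hzy, hzc, huniq⟩ := h y hyM hy
  exact ⟨z, hzy, hzc, fun w hwy hwc => huniq w (hM.mem_of_mem hyM hwy) ⟨hwy, hwc⟩⟩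

theorem exists_choice_relation (hx : x ∈ M) :
    ∃ c ∈ M, ∀ s ∈ M, s ⊆ x → s.Nonempty → ∃ a ∈ s, ∀ b ∈ s, ZFSet.pair s b ∈ c ↔ b = a := by
  obtain ⟨p, hp, hpx⟩ := hM.exists_powerset hx
  have mem_singleton_prod {s z : ZFSet} :
      z ∈ ZFSet.prod {s} s ↔ ∃ a ∈ s, z = ZFSet.pair s a := by
    simp only [ZFSet.mem_prod, ZFSet.mem_singleton, exists_eq_left]
  have hnonempty : ZFSet.sep (fun s => ∃ a ∈ s, a = a) p ∈ M :=
    hM.sep_mem (.bex (Q := fun a _ => a = a) hM.1 (.var 0) (.var_eq_var 0 0)) hp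
  obtain ⟨c, hc, htrans⟩ := hM.exists_transversal
    (hM.image_mem (G := fun s => ZFSet.prod {s} s)
      (.prod hM (.singleton hM (.var 0)) (.var 0)) hnonempty)
    (fun y hy => by
      obtain ⟨s, hs, rfl⟩ := mem_zimage.1 hy
      obtain ⟨a, ha, -⟩ := (ZFSet.mem_sep.1 hs).2
      exact ⟨_, mem_singleton_prod.2 ⟨a, ha, rfl⟩⟩)
    (fun y hy y' hy' z hz hz' => by
      obtain ⟨s, -, rfl⟩ := mem_zimage.1 hy
      obtain ⟨s', -, rfl⟩ := mem_zimage.1 hy'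
      obtain ⟨a, -, rfl⟩ := mem_singleton_prod.1 hz
      obtain ⟨a', -, e⟩ := mem_singleton_prod.1 hz'
      rw [(ZFSet.pair_inj.1 e).1])
  refine ⟨c, hc, fun s hs hsx ⟨b, hb⟩ => ?_⟩
  obtain ⟨z, hz, hzc, huniq⟩ :=
    htrans _ (mem_zimage.2 ⟨s, ZFSet.mem_sep.2 ⟨hpx s hs hsx, b, hb, rfl⟩, rfl⟩)
  obtain ⟨a, ha, rfl⟩ := mem_singleton_prod.1 hz
  exact ⟨a, ha, fun b hb => ⟨fun hbc =>
    (ZFSet.pair_inj.1 (huniq _ (mem_singleton_prod.2 ⟨b, hb, rfl⟩) hbc)).2, fun e => e ▸ hzc⟩⟩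

theorem exists_choice_function (hx : x ∈ M) :
    ∃ G : ZFSet → ZFSet, (DefinableFun M fun v => G (v 0)) ∧
      ∀ s ∈ M, s ⊆ x → s.Nonempty → G s ∈ s := by
  obtain ⟨c, hc, hchoice⟩ := hM.exists_choice_relation hx
  refine ⟨fun s => (ZFSet.sep (fun a => ZFSet.pair s a ∈ c) s).sUnion,
    .sUnion hM (.of_mem hM.1 (fun v hv => ?_) fun ρ => ?_), fun s hs hsx hne => ?_⟩
  · exact hM.sep_mem (.mem (.pair hM (.const (hv 0)) (.var 0)) (.const hc)) (hv 0)
  · simp only [ZFSet.mem_sep]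
    exact .and (.var_mem_var _ _) (.mem (.pair hM (.var _) (.var 0)) (.const hc))
  · obtain ⟨a, ha, hac⟩ := hchoice s hs hsx hne
    have : ZFSet.sep (fun a => ZFSet.pair s a ∈ c) s = {a} := by
      ext b
      rw [ZFSet.mem_sep, ZFSet.mem_singleton]
      exact ⟨fun hb => (hac b hb.1).1 hb.2, fun e => e ▸ ⟨ha, (hac a ha).2 rfl⟩⟩
    simpa only [this, ZFSet.sUnion_singleton] using ha

theorem exists_ordinal_notMem (hx : x ∈ M) : ∃ α ∈ M, IsOrd α ∧ α ∉ x := by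
  by_contra! h
  have hα : IsOrd (ZFSet.sep IsOrd x) :=
    ⟨fun α hα β hβ =>
      let hα := ZFSet.mem_sep.1 hα
      ZFSet.mem_sep.2 ⟨h β (hM.mem_of_mem (hM.mem_of_mem hx hα.1) hβ) (hα.2.mem hβ), hα.2.mem hβ⟩,
      fun α hα => (ZFSet.mem_sep.1 hα).2.1⟩
  have hαM : ZFSet.sep IsOrd x ∈ M := hM.sep_mem (.isOrd hM.1 (.var 0)) hx
  exact ZFSet.mem_irrefl _ (ZFSet.mem_sep.2 ⟨h _ hαM hα, hα⟩)

theorem exists_not_injOn_ordinals {F : ZFSet → ZFSet} (hF : DefinableFun M fun v => F (v 0))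
    (hx : x ∈ M) (hFx : ∀ β ∈ M, IsOrd β → F β ∈ x) :
    ∃ β ∈ M, ∃ γ ∈ M, IsOrd β ∧ IsOrd γ ∧ F β = F γ ∧ β ≠ γ := by
  by_contra! hinj
  have hR : Definable M fun v => IsOrd (v 0) ∧ F (v 0) = v 1 :=
    .and (.isOrd hM.1 (.var 0)) (.eq hF (.var 1))
  obtain ⟨b, hb, hxb⟩ := hM.exists_collection (R := fun y β => IsOrd β ∧ F β = y) hR
    (hM.sep_mem (.ex (Q := fun β v => IsOrd β ∧ F β = v 0) hR) hx)
    fun y hy => (ZFSet.mem_sep.1 hy).2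
  obtain ⟨α, hα, hord, hαb⟩ := hM.exists_ordinal_notMem hb
  obtain ⟨β, hβb, hβ, e⟩ := hxb (F α) (ZFSet.mem_sep.2 ⟨hFx α hα hord, α, hα, hord, rfl⟩)
  exact hαb (hinj β (hM.mem_of_mem hb hβb) α hα hβ hord e ▸ hβb)

theorem exists_ordinal_enumeration (hx : x ∈ M) :
    ∃ F : ZFSet → ZFSet, (DefinableFun M fun v => F (v 0)) ∧
      ∃ α ∈ M, IsOrd α ∧ x ⊆ zimage F α := by
  obtain ⟨G, hG, hGmem⟩ := hM.exists_choice_function hx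
  obtain ⟨F, hF⟩ := exists_recursion (fun s => G (x \ s)) id ZFSet.mem_wf
  have hFM : DefinableFun M fun v => F (v 0) :=
    .of_recursion (G := fun s => G (x \ s)) hM (hG.comp (.diff hM (.const hx) (.var 0))) (.var 0)
      ZFSet.mem_wf hF
  refine ⟨F, hFM, ?_⟩
  by_contra! h
  have fresh {β : ZFSet} (hβ : β ∈ M) (hord : IsOrd β) : F β ∈ x \ zimage F β := by
    obtain ⟨z, hz, hzF⟩ := Set.not_subset.1 (h β hβ hord)
    rw [hF β]
    exact hGmem _ (hM.diff_mem hx (hM.image_mem hFM hβ)) (fun _ hy => (ZFSet.mem_sdiff.1 hy).1)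
      ⟨z, ZFSet.mem_sdiff.2 ⟨hz, hzF⟩⟩
  obtain ⟨β, hβ, γ, hγ, hβo, hγo, e, hne⟩ := hM.exists_not_injOn_ordinals hFM hx
    fun β hβ hord => (ZFSet.mem_sdiff.1 (fresh hβ hord)).1
  rcases hβo.mem_trichotomous hγo with hlt | heq | hlt
  · exact (ZFSet.mem_sdiff.1 (fresh hγ hγo)).2 (mem_zimage.2 ⟨β, hlt, e⟩)
  · exact hne heq
  · exact (ZFSet.mem_sdiff.1 (fresh hβ hβo)).2 (mem_zimage.2 ⟨γ, hlt, e.symm⟩)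

theorem exists_injRel (hx : x ∈ M) : ∃ α ∈ M, IsOrd α ∧ ∃ r ∈ M, InjRel r x α := by
  obtain ⟨F, hF, α, hα, hord, hxα⟩ := hM.exists_ordinal_enumeration hx
  refine ⟨α, hα, hord, graphOn (fun p β => p = F β) x α,
    hM.graphOn_mem (.eq (.var 1) (hF.comp (.var 0))) hx hα, fun p hp => ?_,
    fun p _ p' _ β _ h h' => ?_⟩
  · obtain ⟨β, hβ, e⟩ := mem_zimage.1 (hxα hp)
    exact ⟨β, hβ, pair_mem_graphOn.2 ⟨hp, hβ, e.symm⟩⟩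
  · exact (pair_mem_graphOn.1 h).2.2.trans (pair_mem_graphOn.1 h').2.2.symm

end IsTransModel

/-! ### Coding a transitive set by a relation on an ordinal -/

/-- The relation on `l` that `r` carries over from the membership relation of `t`: when `r` is
an injection of the transitive set `t` into `l`, it determines `t` by the Mostowski collapse. -/
def memCode (t r l : ZFSet) : ZFSet :=
  graphOn (fun γ δ => ∃ x ∈ t, ∃ y ∈ t, ZFSet.pair x γ ∈ r ∧ ZFSet.pair y δ ∈ r ∧ x ∈ y) l l

section MemCode

variable {t r l : ZFSet.{0}}

theorem InjRel.pair_mem_memCode (h : InjRel r t l) {y γ δ : ZFSet} (hy : y ∈ t) (hδ : δ ∈ l)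
    (hyδ : ZFSet.pair y δ ∈ r) :
    ZFSet.pair γ δ ∈ memCode t r l ↔ γ ∈ l ∧ ∃ x ∈ t, ZFSet.pair x γ ∈ r ∧ x ∈ y := by
  rw [memCode, pair_mem_graphOn]
  refine and_congr_right fun _ => ⟨?_, fun ⟨x, hx, hxγ, hxy⟩ => ⟨hδ, x, hx, y, hy, hxγ, hyδ, hxy⟩⟩
  rintro ⟨-, x, hx, y', hy', hxγ, hy'δ, hxy⟩
  exact ⟨x, hx, hxγ, h.inj y hy y' hy' δ hδ hyδ hy'δ ▸ hxy⟩

theorem InjRel.wellFounded_memCode (h : InjRel r t l) :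
    WellFounded fun γ δ => ZFSet.pair γ δ ∈ memCode t r l := by
  let decode (δ : ZFSet) : ZFSet := Classical.epsilon fun y => y ∈ t ∧ ZFSet.pair y δ ∈ r
  have decode_eq {y δ : ZFSet} (hy : y ∈ t) (hδ : δ ∈ l) (hyδ : ZFSet.pair y δ ∈ r) :
      decode δ = y :=
    have hdec := Classical.epsilon_spec (p := fun y => y ∈ t ∧ ZFSet.pair y δ ∈ r) ⟨y, hy, hyδ⟩
    h.inj _ hdec.1 y hy δ hδ hdec.2 hyδ
  refine Subrelation.wf (fun {γ δ} hγδ => ?_) (InvImage.wf decode ZFSet.mem_wf)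
  obtain ⟨hγ, hδ, x, hx, y, hy, hxγ, hyδ, hxy⟩ := pair_mem_graphOn.1 hγδ
  rwa [InvImage, decode_eq hx hγ hxγ, decode_eq hy hδ hyδ]

variable {M : ZFSet.{0}} (hM : IsTransModel M)
include hM

theorem IsTransModel.memCode_mem (ht : t ∈ M) (hr : r ∈ M) (hl : l ∈ M) : memCode t r l ∈ M :=
  hM.graphOn_mem
    (.bex (Q := fun x v => ∃ y ∈ t, ZFSet.pair x (v 1) ∈ r ∧ ZFSet.pair y (v 0) ∈ r ∧ x ∈ y)
      hM.1 (.const ht) <|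
    .bex (Q := fun y v => ZFSet.pair (v 0) (v 2) ∈ r ∧ ZFSet.pair y (v 1) ∈ r ∧ v 0 ∈ y)
      hM.1 (.const ht) <|
    .and (.mem (.pair hM (.var 1) (.var 3)) (.const hr)) <|
    .and (.mem (.pair hM (.var 0) (.var 2)) (.const hr)) (.mem (.var 1) (.var 0))) hl hl

/-- The Mostowski collapse: `y` is recovered from its code `δ` as the set of the elements coded
by the predecessors of `δ`. -/
theorem IsTransModel.subset_of_memCode_mem (ht : t.IsTransitive) (h : InjRel r t l) (hl : l ∈ M)
    (hE : memCode t r l ∈ M) : t ⊆ M := by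
  set pred : ZFSet → ZFSet := fun δ => ZFSet.sep (fun γ => ZFSet.pair γ δ ∈ memCode t r l) l
  have hpred : DefinableFun M fun v => pred (v 0) := by
    refine .of_mem hM.1 (fun v hv => ?_) fun ρ => ?_
    · exact hM.sep_mem (.mem (.pair hM (.var 0) (.const (hv 0))) (.const hE)) hl
    · simp only [pred, ZFSet.mem_sep]
      exact .and (.mem (.var 0) (.const hl)) (.mem (.pair hM (.var 0) (.var _)) (.const hE))
  have wf : WellFounded fun γ δ => γ ∈ pred δ :=
    Subrelation.wf (fun hγ => (ZFSet.mem_sep.1 hγ).2) h.wellFounded_memCode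
  obtain ⟨F, hF⟩ := exists_recursion id pred wf
  have collapse (y : ZFSet) : y ∈ t → ∀ δ ∈ l, ZFSet.pair y δ ∈ r → F δ = y := by
    induction y using ZFSet.inductionOn with | h y ih
    intro hy δ hδ hyδ
    ext x
    rw [hF δ, id, mem_zimage]
    constructor
    · rintro ⟨γ, hγ, rfl⟩
      obtain ⟨hγ, x, hx, hxγ, hxy⟩ :=
        (h.pair_mem_memCode hy hδ hyδ).1 (ZFSet.mem_sep.1 hγ).2
      rwa [ih x hxy hx γ hγ hxγ]
    · intro hxy
      have hx := ht y hy hxy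
      obtain ⟨γ, hγ, hxγ⟩ := h.total x hx
      exact ⟨γ, ZFSet.mem_sep.2 ⟨hγ, (h.pair_mem_memCode hy hδ hyδ).2 ⟨hγ, x, hx, hxγ, hxy⟩⟩,
        ih x hxy hx γ hγ hxγ⟩
  intro y hy
  obtain ⟨δ, hδ, hyδ⟩ := h.total y hy
  exact collapse y hy δ hδ hyδ ▸
    (DefinableFun.of_recursion hM (.var 0) hpred wf hF).1 (fun _ => δ) fun _ => hM.mem_of_mem hl hδ

end MemCode

/-! ### Sets generating an extension -/

/-- The elements of `b` to which `r` relates some element of `c`. -/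
def relImage (r c b : ZFSet) : ZFSet :=
  ZFSet.sep (fun β => ∃ p ∈ c, ZFSet.pair p β ∈ r) b

section Generates

variable {U W M c d X b r : ZFSet.{0}}

theorem IsTransModel.relImage_mem (hM : IsTransModel M) (hr : r ∈ M) (hc : c ∈ M) (hb : b ∈ M) :
    relImage r c b ∈ M :=
  hM.sep_mem (.bex (Q := fun p v => ZFSet.pair p (v 0) ∈ r) hM.1 (.const hc)
    (.mem (.pair hM (.var 0) (.var 1)) (.const hr))) hb

theorem InjRel.sep_relImage (h : InjRel r X b) (hcX : c ⊆ X) :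
    ZFSet.sep (fun p => ∃ β ∈ relImage r c b, ZFSet.pair p β ∈ r) X = c := by
  ext p
  rw [ZFSet.mem_sep]
  constructor
  · rintro ⟨hp, β, hβ, hpβ⟩
    obtain ⟨hβb, p', hp', hp'β⟩ := ZFSet.mem_sep.1 hβ
    rwa [h.inj p hp p' (hcX hp') β hβb hpβ hp'β]
  · intro hp
    obtain ⟨β, hβ, hpβ⟩ := h.total p (hcX hp)
    exact ⟨hcX hp, β, ZFSet.mem_sep.2 ⟨hβ, p, hp, hpβ⟩, hpβ⟩

theorem Generates.of_recoverable (h : Generates U c W) (hd : d ∈ W)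
    (hrec : ∀ W', IsCTM W' → U ⊆ W' → d ∈ W' → c ∈ W') : Generates U d W :=
  ⟨h.1, hd, fun W' hW' hUW' hd' => h.2.2 W' hW' hUW' (hrec W' hW' hUW' hd')⟩

theorem Generates.exists_subset_of_injRel (h : Generates U c W) (hcX : c ⊆ X) (hX : X ∈ U)
    (hb : b ∈ U) (hr : r ∈ U) (hinj : InjRel r X b) : ∃ d ⊆ b, Generates U d W := by
  obtain ⟨-, ⟨hW, -⟩, hUW, -⟩ := h.1
  refine ⟨relImage r c b, fun _ hβ => (ZFSet.mem_sep.1 hβ).1,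
    h.of_recoverable (hW.relImage_mem (hUW hr) h.2.1 (hUW hb)) fun W' ⟨hW', _⟩ hUW' hd => ?_⟩
  rw [← hinj.sep_relImage hcX]
  exact hW'.sep_mem (.bex (Q := fun β v => ZFSet.pair (v 0) β ∈ r) hW'.1 (.const hd)
    (.mem (.pair hW' (.var 1) (.var 0)) (.const (hUW' hr)))) (hUW' hX)

theorem exists_generates_subset_prod (hW : IsSmallExt U W) :
    ∃ l ∈ U, ∃ E ⊆ ZFSet.prod l l, Generates U E W := by
  obtain ⟨hext, m, hm, hmin⟩ := hW
  have hWM : IsTransModel W := hext.2.1.1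
  obtain ⟨t, ht, httrans, hmt⟩ := hWM.exists_transitive hm
  obtain ⟨l, hl, hlord, r, hr, hinj⟩ := hWM.exists_injRel ht
  have hlU : l ∈ U := hext.2.2.2 l hl hlord
  have hm : Generates U m W := ⟨hext, hm, hmin⟩
  exact ⟨l, hlU, memCode t r l, graphOn_subset,
    hm.of_recoverable (hWM.memCode_mem ht hr hl) fun W' hW' hUW' hE =>
      hW'.1.subset_of_memCode_mem httrans hinj (hUW' hlU) hE hmt⟩

theorem exists_generates_subset_ordinal (hW : IsSmallExt U W) :
    ∃ k ∈ U, IsOrd k ∧ ∃ c ⊆ k, Generates U c W := by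
  obtain ⟨l, hl, E, hEl, hE⟩ := exists_generates_subset_prod hW
  have hU : IsTransModel U := hE.1.1.1
  have hll : ZFSet.prod l l ∈ U := hU.prod_mem hl hl
  obtain ⟨k, hk, hkord, r, hr, hinj⟩ := hU.exists_injRel hll
  exact ⟨k, hk, hkord, hE.exists_subset_of_injRel hEl hll hk hr hinj⟩

end Generates

end SmallExt

open SmallExt in
/-- Every small extension `W` of a CTM `U` is generated
from `U` by an unbounded subset of some ordinal `κ ∈ U` which is a cardinal
in `U`. -/
theorem small_extension_generated_by_unbounded_set
    (U W : ZFSet) (hU : IsCTM U) (hW : IsSmallExt U W) :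
    ∃ k, k ∈ U ∧ IsCardinalIn U k ∧
      ∃ c, c ⊆ k ∧ (∀ b ∈ k, ∃ g ∈ c, b ∈ g ∨ b = g) ∧ Generates U c W := by
  let gens : Set ZFSet := {k | k ∈ U ∧ IsOrd k ∧ ∃ c ⊆ k, Generates U c W}
  obtain ⟨k, ⟨hk, hkord, c, hck, hc⟩, hmin⟩ :=
    ZFSet.mem_wf.has_min gens (exists_generates_subset_ordinal hW)
  have not_generates : ∀ b ∈ k, ¬ ∃ d ⊆ b, Generates U d W := fun b hb hd =>
    hmin b ⟨hU.1.mem_of_mem hk hb, hkord.mem hb, hd⟩ hb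
  refine ⟨k, hk, ⟨hk, hkord, fun b hb ⟨j, hj, hinj⟩ => ?_⟩, c, hck, ?_, hc⟩
  · exact not_generates b hb
      (hc.exists_subset_of_injRel hck hk (hU.1.mem_of_mem hk hb) hj hinj.injRel)
  · by_contra! hbdd
    obtain ⟨b, hb, hcb⟩ := hbdd
    have c_subset : c ⊆ b := fun g hg =>
      ((hkord.mem hb).mem_trichotomous (hkord.mem (hck hg))).elim
        (fun h => ((hcb g hg).1 h).elim) (·.resolve_left (hcb g hg).2)
    exact not_generates b hb ⟨c, c_subset, hc⟩
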